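/- arXiv:1511.09073 — 2 statements merged into one kernel-verified Lean document; each statement's English description precedes it below -/
import Mathlib

section
/- For every n ≥ 7, every connected P-free 3-graph H on n vertices that contains a copy of the triangle C has at most 3n − 8 edges; moreover |H| = 3n − 8 holds if and only if H is isomorphic to G_1(n) or to G_2(n). -/
/-- A 3-graph: a finite vertex set together with a finite set of edges
(intended to be 3-element subsets of the vertex set). -/
structure ThreeGraph where
  verts : Finset ℕ
  edges : Finset (Finset ℕ)

namespace ThreeGraph

/-- `G` is a genuine 3-uniform hypergraph: every edge is a 3-element subset of the vertex set. -/
def IsValid (G : ThreeGraph) : Prop :=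
  ∀ e ∈ G.edges, e.card = 3 ∧ e ⊆ G.verts

/-- `H.ContainsCopy F` means `F ⊆ H`: there is an injective map of the vertices of `F`
into those of `H` carrying every edge of `F` to an edge of `H`. -/
def ContainsCopy (H F : ThreeGraph) : Prop :=
  ∃ f : ℕ → ℕ, Set.InjOn f ↑F.verts ∧ (∀ v ∈ F.verts, f v ∈ H.verts) ∧
    ∀ e ∈ F.edges, e.image f ∈ H.edges

/-- `H.Free F` : `H` contains no copy of `F`. -/
def Free (H F : ThreeGraph) : Prop := ¬ H.ContainsCopy F

/-- `IsoCopy F H` : `H` is isomorphic to `F`. -/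
def IsoCopy (F H : ThreeGraph) : Prop :=
  ∃ f : ℕ → ℕ, Set.InjOn f ↑F.verts ∧ F.verts.image f = H.verts ∧
    F.edges.image (Finset.image f) = H.edges

/-- Connectivity: any two vertices are joined by a sequence of vertices in which
consecutive ones lie in a common edge. -/
def Connected (G : ThreeGraph) : Prop :=
  ∀ u ∈ G.verts, ∀ v ∈ G.verts,
    Relation.ReflTransGen (fun a b => ∃ e ∈ G.edges, a ∈ e ∧ b ∈ e) u v

/-- Shift all vertices by `k`. -/
def shiftBy (G : ThreeGraph) (k : ℕ) : ThreeGraph :=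
  ⟨G.verts.image (· + k), G.edges.image (Finset.image (· + k))⟩

/-- Vertex-disjoint union of two 3-graphs. -/
def dUnion (G H : ThreeGraph) : ThreeGraph :=
  ⟨G.verts ∪ (H.shiftBy (G.verts.sup id + 1)).verts,
   G.edges ∪ (H.shiftBy (G.verts.sup id + 1)).edges⟩

end ThreeGraph

/-- The loose 3-uniform path of length 3. -/
def pathP : ThreeGraph :=
  ⟨{0,1,2,3,4,5,6}, {{0,1,2},{2,3,4},{4,5,6}}⟩

/-- The triangle `C`. -/
def triangleC : ThreeGraph :=
  ⟨{0,1,2,3,4,5}, {{0,1,2},{2,3,4},{4,5,0}}⟩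

/-- The matching `M`: two disjoint edges. -/
def matchingM : ThreeGraph :=
  ⟨{0,1,2,3,4,5}, {{0,1,2},{3,4,5}}⟩

/-- `P_2`: two edges sharing exactly one vertex. -/
def pairP2 : ThreeGraph :=
  ⟨{0,1,2,3,4}, {{0,1,2},{2,3,4}}⟩

/-- The complete 3-graph `K_n`. -/
def KK (n : ℕ) : ThreeGraph :=
  ⟨Finset.range n, (Finset.range n).powersetCard 3⟩

/-- The full star `S_n` with center `0`. -/
def SS (n : ℕ) : ThreeGraph :=
  ⟨Finset.range n, ((Finset.range n).powersetCard 3).filter (fun e => 0 ∈ e)⟩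

/-- `G_1(n)` with `x,y,z,v = 0,1,2,3`. -/
def G1 (n : ℕ) : ThreeGraph :=
  ⟨Finset.range n,
   insert {0,1,2}
     (((Finset.range n).powersetCard 3).filter
       (fun h => 3 ∈ h ∧ (h ∩ ({0,1,2} : Finset ℕ)).Nonempty))⟩

/-- `G_2(n)` with `x,y,z = 0,1,2`. -/
def G2 (n : ℕ) : ThreeGraph :=
  ⟨Finset.range n,
   insert {0,1,2}
     (((Finset.range n).powersetCard 3).filter
       (fun h => (h ∩ ({0,1,2} : Finset ℕ)).card = 2))⟩

/-- `G_3(n)` with `x,y₁,y₂,z₁,z₂ = 0,1,2,3,4`. -/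
def G3 (n : ℕ) : ThreeGraph :=
  ⟨Finset.range n,
   ((({0,1,2,3,4} : Finset ℕ).powersetCard 3) \ {{1,2,3},{1,2,4}}) ∪
     ((Finset.range n \ ({0,1,2,3,4} : Finset ℕ)).biUnion (fun w => {{0,3,w},{0,4,w}}))⟩

/-- `K_5^{+t}`: `K_5` on `{0,…,4}` with `a,b = 0,1` and `t` pendant edges `{0,1,v}`. -/
def K5plus (t : ℕ) : ThreeGraph :=
  ⟨Finset.range (5 + t),
   ((Finset.range 5).powersetCard 3) ∪ ((Finset.Ico 5 (5 + t)).image (fun v => {0,1,v}))⟩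

/-- The comet `Co(n)`: a `K_4` on `{0,1,2,3}` and a full star on `{0} ∪ {4,…,n-1}`
with center `0`. -/
def comet (n : ℕ) : ThreeGraph :=
  ⟨Finset.range n,
   (({0,1,2,3} : Finset ℕ).powersetCard 3) ∪
     (((insert 0 (Finset.Ico 4 n)).powersetCard 3).filter (fun e => 0 ∈ e))⟩

/-- `W = V(H) \ U`. -/
def Wset (H : ThreeGraph) (U : Finset ℕ) : Finset ℕ := H.verts \ U

/-- `W_0`: the vertices of `W` lying in no edge of `H` entirely contained in `W`. -/
def W0set (H : ThreeGraph) (U : Finset ℕ) : Finset ℕ :=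
  (Wset H U).filter (fun v => ∀ e ∈ H.edges, e ⊆ Wset H U → v ∉ e)

/-- `W_1 = W \ W_0`. -/
def W1set (H : ThreeGraph) (U : Finset ℕ) : Finset ℕ :=
  Wset H U \ W0set H U

/-- `H_1`: the edges of `H` meeting both `U` and `W_1`. -/
def H1set (H : ThreeGraph) (U : Finset ℕ) : Finset (Finset ℕ) :=
  H.edges.filter (fun e => (e ∩ U).Nonempty ∧ (e ∩ W1set H U).Nonempty)

/-- `H[U]`: the edges of `H` entirely contained in `U`. -/
def HUset (H : ThreeGraph) (U : Finset ℕ) : Finset (Finset ℕ) :=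
  H.edges.filter (fun e => e ⊆ U)

/-!
Let `U` be the six vertices of a triangle in `H`. Since `H` is connected and has no loose path of
length 3, every edge meets `U`, and an edge with a vertex `w` outside `U` consists of `w` and a
*chord*: two corners of the triangle, or a corner and the midpoint of the opposite side. Let `I` be
the set of edges inside `U` and `L(w)` the set of chords forming an edge with `w`.

* Two complementary triples of `U` that split a chord in `L(w)` are the ends of a loose path through
  the edge over that chord, so at most 6 of the 12 triples splitting it lie in `I`. With the 4
  triples containing the chord this gives `|I| ≤ 10`, up to one exceptional triple that is disjoint
  from the chord and forces `|L(w)| = 1`.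
* `|I| + |L(w)| ≤ 12`, unless `L(w)` consists of the three pairs of corners or of the three chords
  from one corner to the opposite side, when the sum can be 13.
* If `L(w)` contains the chord from a corner to the opposite midpoint, then all other `L(w')`
  consist of chords from that corner to the opposite side. So at most one `w` has `|L(w)| > 3`.

Singling out that `w` gives `|H| ≤ 13 + 3 (n - 7) = 3 n - 8`. In the case of equality all the `L(w)`
are the three pairs of corners, which leads to `G₂(n)`, or all are the three chords from one common
corner, which leads to `G₁(n)`.
-/

open Finset

/-- Three sets `e`, `f`, `g` forming, in this order, a loose path of length 3; for 3-element sets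
this is a copy of `pathP`. -/
def IsLoosePath {α : Type*} [DecidableEq α] (e f g : Finset α) : Prop :=
  #(e ∩ f) = 1 ∧ #(f ∩ g) = 1 ∧ Disjoint e g

instance {α : Type*} [DecidableEq α] (e f g : Finset α) : Decidable (IsLoosePath e f g) :=
  inferInstanceAs (Decidable (_ ∧ _))

theorem exists_eq_insert_of_card_inter_eq_one {α : Type*} [DecidableEq α] {e f : Finset α}
    (he : #e = 3) (hef : #(e ∩ f) = 1) :
    ∃ a b c, e = {a, b, c} ∧ a ≠ b ∧ a ∉ f ∧ b ∉ f ∧ c ∈ f := by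
  have hdiff : #(e \ f) = 2 := by
    have := card_sdiff_add_card_inter e f
    lia
  obtain ⟨a, b, hab, hdiff_eq⟩ := card_eq_two.1 hdiff
  obtain ⟨c, hc⟩ := card_eq_one.1 hef
  have ha : a ∈ e \ f := by simp [hdiff_eq]
  have hb : b ∈ e \ f := by simp [hdiff_eq]
  have hcf : c ∈ e ∩ f := by simp [hc]
  refine ⟨a, b, c, ?_, hab, (mem_sdiff.1 ha).2, (mem_sdiff.1 hb).2, (mem_inter.1 hcf).2⟩
  rw [← sdiff_union_inter e f, hdiff_eq, hc, insert_union, singleton_union]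

theorem IsLoosePath.exists_nodup {α : Type*} [DecidableEq α] {e f g : Finset α}
    (h : IsLoosePath e f g) (he : #e = 3) (hf : #f = 3) (hg : #g = 3) :
    ∃ a b c m d p q, [a, b, c, m, d, p, q].Nodup ∧ e = {a, b, c} ∧ f = {c, m, d} ∧
      g = {d, p, q} := by
  obtain ⟨hef, hfg, hdisj⟩ := h
  obtain ⟨a, b, c, rfl, hab, haf, hbf, hcf⟩ := exists_eq_insert_of_card_inter_eq_one he hef
  obtain ⟨p, q, d, rfl, hpq, hpf, hqf, hdf⟩ :=
    exists_eq_insert_of_card_inter_eq_one hg (inter_comm f g ▸ hfg)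
  simp only [disjoint_insert_left, disjoint_singleton_left, mem_insert, mem_singleton,
    not_or] at hdisj
  obtain ⟨m, hm⟩ : ∃ m, f \ {c, d} = {m} := by
    rw [← card_eq_one, card_sdiff_of_subset (by simp [insert_subset_iff, hcf, hdf]), hf,
      card_pair hdisj.2.2.2.2]
  have hmf : m ∈ f ∧ m ≠ c ∧ m ≠ d := by
    simpa [hm] using mem_sdiff (s := f) (t := {c, d}) (a := m)
  have hf_eq : f = {c, m, d} := by
    rw [← sdiff_union_of_subset (by simp [insert_subset_iff, hcf, hdf] : {c, d} ⊆ f), hm,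
      singleton_union, insert_comm]
  refine ⟨a, b, c, m, d, p, q, ?_, rfl, hf_eq, by rw [insert_comm d, pair_comm d]⟩
  have hne {x y : α} (hx : x ∈ f) (hy : y ∉ f) : x ≠ y := fun h ↦ hy (h ▸ hx)
  simp [hdisj, hab, hpq, hmf, (hne hcf haf).symm, (hne hcf hbf).symm, (hne hmf.1 haf).symm,
    (hne hmf.1 hbf).symm, hne hmf.1 hpf, hne hmf.1 hqf, hne hdf hpf, hne hdf hqf, hmf.2.1.symm]

/-- The six vertices of an abstract copy of the triangle `C`: `.inl i` is its `i`-th corner, a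
vertex lying on two edges, and `.inr i` is the midpoint of the edge that misses that corner. -/
abbrev TriangleVertex := Fin 3 ⊕ Fin 3

namespace TriangleVertex

/-- The edge of the triangle opposite the `i`-th corner; indices are taken modulo 3. -/
def side (i : Fin 3) : Finset TriangleVertex := {.inl (i + 1), .inl (i + 2), .inr i}

/-- The two corners on the side opposite the `i`-th corner. -/
def base (i : Fin 3) : Finset TriangleVertex := {.inl (i + 1), .inl (i + 2)}

/-- The `i`-th corner together with the midpoint of the opposite side. -/
def median (i : Fin 3) : Finset TriangleVertex := {.inl i, .inr i}

/-- The three corners. -/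
def corners : Finset TriangleVertex := univ.image .inl

/-- The three pairs of corners. -/
def bases : Finset (Finset TriangleVertex) := univ.image base

/-- The pairs that an edge with a single vertex off the triangle can cut out of it. -/
def chords : Finset (Finset TriangleVertex) := bases ∪ univ.image median

/-- The chords joining the `i`-th corner to a vertex of the opposite side: the median through that
corner and the two bases through it. -/
def cevians (i : Fin 3) : Finset (Finset TriangleVertex) := (side i).image fun u ↦ {.inl i, u}

/-- `s` and `t` form a loose path together with a side of the triangle. -/
def Clash (s t : Finset TriangleVertex) : Prop :=
  ∃ i, IsLoosePath s (side i) t ∨ IsLoosePath (side i) s t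

instance (s t : Finset TriangleVertex) : Decidable (Clash s t) :=
  inferInstanceAs (Decidable (∃ _, _))

theorem mem_chords_of_not_isLoosePath : ∀ s : Finset TriangleVertex, s.Nonempty → #s < 3 →
    (∀ i j, ¬IsLoosePath s (side i) (side j)) → s ∈ chords := by
  decide +kernel

theorem card_of_mem_chords : ∀ s ∈ chords, #s = 2 := by decide

theorem exists_card_inter_side_eq_one : ∀ s ∈ chords, ∃ i, #(s ∩ side i) = 1 := by decide +kernel

theorem card_side (i : Fin 3) : #(side i) = 3 := by decide +revert

theorem inl_notMem_side (i : Fin 3) : .inl i ∉ side i := by decide +revert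

theorem exists_mem_side (u : TriangleVertex) : ∃ i, u ∈ side i := by decide +revert

theorem card_triples_inter_eq_two :
    ∀ s ∈ chords, #{t : Finset TriangleVertex | #t = 3 ∧ #(s ∩ t) = 2} = 4 := by
  decide +kernel

theorem card_triples_inter_eq_one :
    ∀ s ∈ chords, #{t : Finset TriangleVertex | #t = 3 ∧ #(s ∩ t) = 1} = 12 := by
  decide +kernel

theorem card_triples_disjoint_le_one :
    ∀ s ∈ chords, #{t : Finset TriangleVertex | #t = 3 ∧ Disjoint s t ∧ ¬Clash s t} ≤ 1 := by
  decide +kernel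

theorem eq_of_disjoint_of_not_clash : ∀ s ∈ chords, ∀ s' ∈ chords, ∀ t, #t = 3 → Disjoint s t →
    ¬Clash s t → ¬Clash s' t → s' = s := by
  decide +kernel

theorem exists_isLoosePath_median_side : ∀ i, ∀ s ∈ chords, s ∉ cevians i →
    ∃ j, IsLoosePath (median i) (side j) s := by
  decide +kernel

theorem two_le_card_inter_corners_of_not_clash :
    ∀ t, #t = 3 → (∀ s ∈ bases, ¬Clash s t) → 2 ≤ #(t ∩ corners) := by
  decide +kernel

theorem two_le_card_inter_corners_of_mem_bases : ∀ s ∈ bases, 2 ≤ #(s ∩ corners) := by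
  decide +kernel

theorem eq_side_or_of_not_clash : ∀ i t, #t = 3 → (∀ s ∈ cevians i, ¬Clash s t) →
    t = side i ∨ .inl i ∈ t ∧ ¬Disjoint t (side i) := by
  decide +kernel

theorem inl_mem_and_not_disjoint_of_mem_cevians :
    ∀ i, ∀ s ∈ cevians i, .inl i ∈ s ∧ ¬Disjoint s (side i) := by
  decide +kernel

theorem card_cevians (i : Fin 3) : #(cevians i) = 3 := by decide +revert

theorem card_bases : #bases = 3 := by decide

theorem median_mem_cevians (i : Fin 3) : median i ∈ cevians i := by decide +revert

theorem cevians_eq (i : Fin 3) :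
    cevians i = image base {i + 1, i + 2} ∪ image median {i} := by
  decide +revert

theorem card_not_clash_add_card_le : ∀ A B : Finset (Fin 3), 3 ≤ #A + #B →
    A = univ ∧ B = ∅ ∨ (∃ i, A = {i + 1, i + 2} ∧ B = {i}) ∨
      #{t : Finset TriangleVertex | #t = 3 ∧ (∀ i ∈ A, ¬Clash (base i) t) ∧
        ∀ i ∈ B, ¬Clash (median i) t} + (#A + #B) ≤ 12 := by
  decide +kernel

theorem eq_bases_or_eq_cevians_or_card_le {L : Finset (Finset TriangleVertex)} (hL : L ⊆ chords)
    (hcard : 3 ≤ #L) : L = bases ∨ (∃ i, L = cevians i) ∨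
      #{t : Finset TriangleVertex | #t = 3 ∧ ∀ s ∈ L, ¬Clash s t} + #L ≤ 12 := by
  obtain ⟨A, -, hA⟩ := subset_image_iff.1 (inter_subset_right : L ∩ bases ⊆ univ.image base)
  obtain ⟨B, -, hB⟩ := subset_image_iff.1
    (inter_subset_right : L ∩ univ.image median ⊆ univ.image median)
  have hAB : L = A.image base ∪ B.image median := by
    rw [hA, hB, ← inter_union_distrib_left]
    exact (inter_eq_left.2 hL).symm
  have hle : #L ≤ #A + #B :=
    hAB ▸ (card_union_le _ _).trans (add_le_add card_image_le card_image_le)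
  rcases card_not_clash_add_card_le A B (hcard.trans hle) with ⟨rfl, rfl⟩ | ⟨i, rfl, rfl⟩ | h
  · exact .inl (by rw [hAB, image_empty, union_empty, bases])
  · exact .inr (.inl ⟨i, hAB.trans (cevians_eq i).symm⟩)
  · refine .inr (.inr ((add_le_add (card_le_card fun t ↦ ?_) hle).trans h))
    subst hAB
    simp only [mem_filter_univ, mem_union, mem_image]
    grind

end TriangleVertex

open TriangleVertex

section Trace

variable {α : Type*} [DecidableEq α] (v : TriangleVertex ↪ α) (E : Finset (Finset α))

/-- The part of `e` lying on the copy of the triangle embedded by `v`. -/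
def trace (e : Finset α) : Finset TriangleVertex := {u | v u ∈ e}

/-- The edges of `E` contained in the vertex set of the copy of the triangle embedded by `v`. -/
def inside : Finset (Finset TriangleVertex) := {t | t.map v ∈ E}

/-- The link of the vertex `w` in `E`, restricted to the copy of the triangle embedded by `v`. -/
def link (w : α) : Finset (Finset TriangleVertex) := {s | insert w (s.map v) ∈ E}

variable {v E} {e f : Finset α} {s t : Finset TriangleVertex} {w : α}

theorem mem_trace {u : TriangleVertex} : u ∈ trace v e ↔ v u ∈ e := by simp [trace]

theorem mem_inside : t ∈ inside v E ↔ t.map v ∈ E := by simp [inside]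

theorem mem_link : s ∈ link v E w ↔ insert w (s.map v) ∈ E := by simp [link]

theorem map_trace_subset : (trace v e).map v ⊆ e := by
  rintro _ h
  obtain ⟨u, hu, rfl⟩ := mem_map.1 h
  exact mem_trace.1 hu

theorem trace_map : trace v (s.map v) = s := by ext; simp [mem_trace]

theorem trace_insert (hw : w ∉ Set.range v) : trace v (insert w e) = trace v e := by
  ext u
  simp [mem_trace, show v u ≠ w from fun h ↦ hw ⟨u, h⟩]

theorem inter_map_eq : e ∩ s.map v = (trace v e ∩ s).map v := by
  ext
  simp only [mem_inter, mem_map, mem_trace]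
  grind

theorem map_inter_eq : s.map v ∩ e = (s ∩ trace v e).map v := by
  rw [inter_comm, inter_map_eq, inter_comm]

theorem disjoint_map_iff : Disjoint e (s.map v) ↔ Disjoint (trace v e) s := by
  simp only [disjoint_iff_inter_eq_empty, inter_map_eq, map_eq_empty]

theorem isLoosePath_map_map_iff :
    IsLoosePath e (s.map v) (t.map v) ↔ IsLoosePath (trace v e) s t := by
  simp only [IsLoosePath, inter_map_eq, trace_map, disjoint_map_iff, card_map]

theorem isLoosePath_map_middle_iff :
    IsLoosePath (s.map v) e (t.map v) ↔ IsLoosePath s (trace v e) t := by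
  simp only [IsLoosePath, map_inter_eq, inter_map_eq, disjoint_map_iff, trace_map, card_map]

end Trace

/-- The triples in `E` form a 3-graph without loose paths of length 3, in which `v` embeds a
triangle. -/
structure PathFreeWithTriangle {α : Type*} [DecidableEq α] (E : Finset (Finset α))
    (v : TriangleVertex ↪ α) : Prop where
  card_eq : ∀ e ∈ E, #e = 3
  not_isLoosePath : ∀ e ∈ E, ∀ f ∈ E, ∀ g ∈ E, ¬IsLoosePath e f g
  side_mem : ∀ i, (side i).map v ∈ E

namespace PathFreeWithTriangle

variable {α : Type*} [DecidableEq α] {E : Finset (Finset α)} {v : TriangleVertex ↪ α}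
  {e f : Finset α} {s t : Finset TriangleVertex} {a w : α}

theorem card_of_mem_inside (h : PathFreeWithTriangle E v) (ht : t ∈ inside v E) : #t = 3 := by
  simpa using h.card_eq _ (mem_inside.1 ht)

theorem not_clash (h : PathFreeWithTriangle E v) (he : e ∈ E) (ht : t ∈ inside v E) :
    ¬Clash (trace v e) t := by
  rintro ⟨i, hi | hi⟩
  · exact h.not_isLoosePath _ he _ (h.side_mem i) _ (mem_inside.1 ht)
      (isLoosePath_map_map_iff.2 hi)
  · exact h.not_isLoosePath _ (h.side_mem i) _ he _ (mem_inside.1 ht)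
      (isLoosePath_map_middle_iff.2 hi)

theorem not_clash_of_mem_link (h : PathFreeWithTriangle E v) (hw : w ∉ Set.range v)
    (hs : s ∈ link v E w) (ht : t ∈ inside v E) : ¬Clash s t := by
  simpa only [trace_insert hw, trace_map] using h.not_clash (mem_link.1 hs) ht

theorem trace_mem_chords (h : PathFreeWithTriangle E v) (he : e ∈ E) (hwe : w ∈ e)
    (hw : w ∉ Set.range v) (hne : (trace v e).Nonempty) : trace v e ∈ chords := by
  refine mem_chords_of_not_isLoosePath _ hne ?_ fun i j hij ↦
    h.not_isLoosePath _ he _ (h.side_mem i) _ (h.side_mem j) (isLoosePath_map_map_iff.2 hij)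
  rw [← card_map v, ← h.card_eq e he]
  exact card_lt_card (map_trace_subset.ssubset_of_mem_notMem hwe (by grind))

theorem insert_map_trace (h : PathFreeWithTriangle E v) (he : e ∈ E) (hwe : w ∈ e)
    (hw : w ∉ Set.range v) (hne : (trace v e).Nonempty) : insert w ((trace v e).map v) = e := by
  refine eq_of_subset_of_card_le (insert_subset hwe map_trace_subset) ?_
  rw [card_insert_of_notMem (by grind), card_map,
    card_of_mem_chords _ (h.trace_mem_chords he hwe hw hne), h.card_eq e he]

theorem trace_mem_link (h : PathFreeWithTriangle E v) (he : e ∈ E) (hwe : w ∈ e)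
    (hw : w ∉ Set.range v) (hne : (trace v e).Nonempty) : trace v e ∈ link v E w := by
  rwa [mem_link, h.insert_map_trace he hwe hw hne]

theorem link_subset_chords (h : PathFreeWithTriangle E v) (hw : w ∉ Set.range v) :
    link v E w ⊆ chords := by
  intro s hs
  have htr : trace v (insert w (s.map v)) = s := by rw [trace_insert hw, trace_map]
  have hcard := h.card_eq _ (mem_link.1 hs)
  rw [card_insert_of_notMem (by grind), card_map] at hcard
  exact htr ▸ h.trace_mem_chords (mem_link.1 hs) (mem_insert_self _ _) hw
    (by rw [htr]; exact card_pos.1 (by lia))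

theorem trace_nonempty_of_mem (h : PathFreeWithTriangle E v) (he : e ∈ E) (hf : f ∈ E)
    (hae : a ∈ e) (haf : a ∈ f) (hne : (trace v e).Nonempty) : (trace v f).Nonempty := by
  by_contra hf_empty
  rw [not_nonempty_iff_eq_empty] at hf_empty
  have hav : a ∉ Set.range v := by
    rintro ⟨u, rfl⟩
    exact notMem_empty u (hf_empty ▸ mem_trace.2 haf)
  obtain ⟨i, hi⟩ := exists_card_inter_side_eq_one _ (h.trace_mem_chords he hae hav hne)
  have hfe : f ∩ e = {a} := by
    rw [← h.insert_map_trace he hae hav hne, inter_insert_of_mem haf, inter_map_eq, hf_empty]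
    rfl
  refine h.not_isLoosePath f hf e he _ (h.side_mem i) ⟨?_, ?_, ?_⟩
  · rw [hfe, card_singleton]
  · rw [inter_map_eq, card_map, hi]
  · rw [disjoint_map_iff, hf_empty]
    exact disjoint_empty_left _

theorem trace_nonempty_of_reflTransGen (h : PathFreeWithTriangle E v) {u : TriangleVertex}
    (hua : Relation.ReflTransGen (fun b c ↦ ∃ f ∈ E, b ∈ f ∧ c ∈ f) (v u) a) (he : e ∈ E)
    (hae : a ∈ e) : (trace v e).Nonempty := by
  induction hua generalizing e with
  | refl => exact ⟨u, mem_trace.2 hae⟩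
  | tail _ hbc ih =>
    obtain ⟨f, hf, hbf, hcf⟩ := hbc
    exact h.trace_nonempty_of_mem hf he hcf hae (ih hf hbf)

theorem card_inside_inter_eq_one_le (h : PathFreeWithTriangle E v) (hw : w ∉ Set.range v)
    (hs : s ∈ link v E w) : #{t ∈ inside v E | #(s ∩ t) = 1} ≤ 6 := by
  have hs_chord := h.link_subset_chords hw hs
  have hs_card := card_of_mem_chords s hs_chord
  set A : Finset (Finset TriangleVertex) := {t ∈ inside v E | #(s ∩ t) = 1}
  have hinter_compl {t} (ht : t ∈ A) : #(s ∩ tᶜ) = 1 := by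
    have := card_sdiff_add_card_inter s t
    rw [sdiff_eq_inter_compl, (mem_filter.1 ht).2] at this
    lia
  have hcompl_card {t} (ht : t ∈ A) : #tᶜ = 3 := by
    rw [card_compl, h.card_of_mem_inside (mem_filter.1 ht).1]
    rfl
  have hcompl_notMem {t} (ht : t ∈ A) : tᶜ ∉ A := fun htc ↦
    h.not_isLoosePath _ (mem_inside.1 (mem_filter.1 ht).1) _ (mem_link.1 hs) _
      (mem_inside.1 (mem_filter.1 htc).1) <| isLoosePath_map_middle_iff.2 <| by
        rw [trace_insert hw, trace_map]
        exact ⟨inter_comm s t ▸ (mem_filter.1 ht).2, hinter_compl ht, disjoint_compl_right⟩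
  have hdisj : Disjoint A (A.image compl) := by
    rw [disjoint_right]
    rintro _ htc ht
    obtain ⟨t, ht', rfl⟩ := mem_image.1 htc
    exact hcompl_notMem ht' ht
  have hsub : A ∪ A.image compl ⊆ ({t | #t = 3 ∧ #(s ∩ t) = 1} : Finset _) := by
    refine union_subset (fun t ht ↦ ?_) (image_subset_iff.2 fun t ht ↦ ?_)
    · exact mem_filter_univ _ |>.2
        ⟨h.card_of_mem_inside (mem_filter.1 ht).1, (mem_filter.1 ht).2⟩
    · exact mem_filter_univ _ |>.2 ⟨hcompl_card ht, hinter_compl ht⟩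
  have hle := card_le_card hsub
  rw [card_union_of_disjoint hdisj, card_image_of_injective _ compl_injective,
    card_triples_inter_eq_one s hs_chord] at hle
  lia

theorem card_inside_le (h : PathFreeWithTriangle E v) (hw : w ∉ Set.range v)
    (hs : s ∈ link v E w) :
    #(inside v E) ≤ 10 + #{t ∈ inside v E | Disjoint s t} := by
  have hs_chord := h.link_subset_chords hw hs
  have hs_card := card_of_mem_chords s hs_chord
  set I := inside v E
  have hsplit : I = {t ∈ I | #(s ∩ t) = 2} ∪ {t ∈ I | #(s ∩ t) = 1} ∪ {t ∈ I | Disjoint s t} := by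
    ext t
    have : #(s ∩ t) ≤ 2 := hs_card ▸ card_le_card inter_subset_left
    simp only [mem_union, mem_filter, disjoint_iff_inter_eq_empty, ← card_eq_zero]
    grind
  have htwo : #{t ∈ I | #(s ∩ t) = 2} ≤ 4 := by
    rw [← card_triples_inter_eq_two s hs_chord]
    refine card_le_card fun t ht ↦ ?_
    simp only [mem_filter, mem_univ, true_and] at ht ⊢
    exact ⟨h.card_of_mem_inside ht.1, ht.2⟩
  have hone := h.card_inside_inter_eq_one_le hw hs
  have h₁ := card_union_le ({t ∈ I | #(s ∩ t) = 2} ∪ {t ∈ I | #(s ∩ t) = 1}) {t ∈ I | Disjoint s t}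
  have h₂ := card_union_le {t ∈ I | #(s ∩ t) = 2} {t ∈ I | #(s ∩ t) = 1}
  rw [← hsplit] at h₁
  lia

theorem card_inside_add_card_link_le_or (h : PathFreeWithTriangle E v) (hw : w ∉ Set.range v)
    (hne : (link v E w).Nonempty) : #(inside v E) + #(link v E w) ≤ 12 ∨
      #(inside v E) ≤ 10 ∧ (link v E w = bases ∨ ∃ i, link v E w = cevians i) := by
  have hL := h.link_subset_chords hw
  have hclash {s t} (hs : s ∈ link v E w) (ht : t ∈ inside v E) : ¬Clash s t :=
    h.not_clash_of_mem_link hw hs ht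
  by_cases hdisj : ∃ s ∈ link v E w, ∃ t ∈ inside v E, Disjoint s t
  · obtain ⟨s, hs, t, ht, hst⟩ := hdisj
    have hlink : #(link v E w) ≤ 1 := card_le_one_iff_subset_singleton.2 ⟨s, fun s' hs' ↦
      mem_singleton.2 <| eq_of_disjoint_of_not_clash s (hL hs) s' (hL hs') t
        (h.card_of_mem_inside ht) hst (hclash hs ht) (hclash hs' ht)⟩
    have hdisjoint : #{t ∈ inside v E | Disjoint s t} ≤ 1 :=
      (card_le_card fun t ht ↦ (mem_filter_univ _).2 ⟨h.card_of_mem_inside (mem_filter.1 ht).1,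
        (mem_filter.1 ht).2, hclash hs (mem_filter.1 ht).1⟩).trans
        (card_triples_disjoint_le_one s (hL hs))
    have := h.card_inside_le hw hs
    lia
  · push Not at hdisj
    obtain ⟨s, hs⟩ := hne
    have hinside : #(inside v E) ≤ 10 := by
      simpa [filter_false_of_mem (hdisj s hs)] using h.card_inside_le hw hs
    rcases le_or_gt 3 #(link v E w) with hthree | htwo
    · rcases eq_bases_or_eq_cevians_or_card_le hL hthree with hbases | hcevians | hle
      · exact .inr ⟨hinside, .inl hbases⟩
      · exact .inr ⟨hinside, .inr hcevians⟩
      · refine .inl (le_trans (Nat.add_le_add_right (card_le_card fun t ht ↦ ?_) _) hle)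
        exact (mem_filter_univ _).2 ⟨h.card_of_mem_inside ht, fun s hs ↦ hclash hs ht⟩
    · lia

theorem link_subset_cevians (h : PathFreeWithTriangle E v) (hw : w ∉ Set.range v)
    (ha : a ∉ Set.range v) (hwa : w ≠ a) {i : Fin 3} (hi : median i ∈ link v E w) :
    link v E a ⊆ cevians i := by
  intro s hs
  by_contra hs_cevians
  obtain ⟨j, hmedian, hside, hdisj⟩ :=
    exists_isLoosePath_median_side i s (h.link_subset_chords ha hs) hs_cevians
  have htrace {b} (hb : b ∉ Set.range v) (r) : trace v (insert b (r.map v)) = r := by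
    rw [trace_insert hb, trace_map]
  refine h.not_isLoosePath _ (mem_link.1 hi) _ (h.side_mem j) _ (mem_link.1 hs) ⟨?_, ?_, ?_⟩
  · rwa [inter_map_eq, htrace hw, card_map]
  · rwa [map_inter_eq, htrace ha, card_map]
  · rw [disjoint_insert_left, disjoint_insert_right, disjoint_map_iff, trace_map]
    refine ⟨by grind, by grind, hdisj⟩

theorem card_link_le_three (h : PathFreeWithTriangle E v) (hw : w ∉ Set.range v)
    (ha : a ∉ Set.range v) (hwa : w ≠ a) (hfour : 3 < #(link v E w)) : #(link v E a) ≤ 3 := by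
  have hnot : ¬link v E w ⊆ bases := fun hsub ↦ by
    have := card_le_card hsub
    rw [card_bases] at this
    lia
  obtain ⟨s, hs, hs_bases⟩ := not_subset.1 hnot
  obtain ⟨i, -, rfl⟩ := mem_image.1
    ((mem_union.1 (h.link_subset_chords hw hs)).resolve_left hs_bases)
  exact card_cevians i ▸ card_le_card (h.link_subset_cevians hw ha hwa hs)

end PathFreeWithTriangle

/-- A triangle, embedded by `v` in a 3-graph `(V, E)` without loose paths of length 3, that every
edge meets; moreover `(V, E)` has no isolated vertices. Connectedness is used in this form only. -/
structure SpanningTriangle {α : Type*} [DecidableEq α] (V : Finset α) (E : Finset (Finset α))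
    (v : TriangleVertex ↪ α) : Prop extends PathFreeWithTriangle E v where
  subset : ∀ e ∈ E, e ⊆ V
  trace_nonempty : ∀ e ∈ E, (trace v e).Nonempty
  exists_mem : ∀ w ∈ V, ∃ e ∈ E, w ∈ e

theorem PathFreeWithTriangle.spanningTriangle {α : Type*} [DecidableEq α] {V : Finset α}
    {E : Finset (Finset α)} {v : TriangleVertex ↪ α} (h : PathFreeWithTriangle E v)
    (hE : ∀ e ∈ E, e ⊆ V)
    (hconn : ∀ a ∈ V, ∀ b ∈ V, Relation.ReflTransGen (fun b c ↦ ∃ e ∈ E, b ∈ e ∧ c ∈ e) a b) :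
    SpanningTriangle V E v := by
  obtain ⟨i, hi⟩ := exists_mem_side (.inl 0)
  have hroot : v (.inl 0) ∈ V := hE _ (h.side_mem i) (mem_map_of_mem v hi)
  refine { toPathFreeWithTriangle := h, subset := hE, trace_nonempty := ?_, exists_mem := ?_ }
  · intro e he
    obtain ⟨a, ha⟩ : e.Nonempty := card_pos.1 (by rw [h.card_eq e he]; lia)
    exact h.trace_nonempty_of_reflTransGen (hconn _ hroot a (hE e he ha)) he ha
  · intro w hw
    rcases (hconn _ hroot w hw).cases_tail with rfl | ⟨a, -, e, he, -, hwe⟩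
    · exact ⟨_, h.side_mem i, mem_map_of_mem v hi⟩
    · exact ⟨e, he, hwe⟩

namespace SpanningTriangle

variable {α : Type*} [DecidableEq α] {V : Finset α} {E : Finset (Finset α)}
  {v : TriangleVertex ↪ α} {e : Finset α} {w : α}

theorem apply_mem (h : SpanningTriangle V E v) (u : TriangleVertex) : v u ∈ V := by
  obtain ⟨i, hi⟩ := exists_mem_side u
  exact h.subset _ (h.side_mem i) (mem_map_of_mem v hi)

theorem link_nonempty (h : SpanningTriangle V E v) (hw : w ∈ V) (hwv : w ∉ Set.range v) :
    (link v E w).Nonempty := by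
  obtain ⟨e, he, hwe⟩ := h.exists_mem w hw
  exact ⟨_, h.trace_mem_link he hwe hwv (h.trace_nonempty e he)⟩

theorem trace_mem_inside_or (h : SpanningTriangle V E v) (he : e ∈ E) :
    (trace v e ∈ inside v E ∧ (trace v e).map v = e) ∨
      ∃ w ∈ V, w ∉ Set.range v ∧ trace v e ∈ link v E w ∧ insert w ((trace v e).map v) = e := by
  by_cases hv : (e : Set α) ⊆ Set.range v
  · have htrace : (trace v e).map v = e := map_trace_subset.antisymm fun a ha ↦ by
      obtain ⟨u, rfl⟩ := hv ha
      exact mem_map_of_mem v (mem_trace.2 ha)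
    exact .inl ⟨by rwa [mem_inside, htrace], htrace⟩
  · obtain ⟨w, hwe, hwv⟩ := Set.not_subset.1 hv
    have hne := h.trace_nonempty e he
    exact .inr ⟨w, h.subset e he hwe, hwv, h.trace_mem_link he hwe hwv hne,
      h.insert_map_trace he hwe hwv hne⟩

theorem card_le_card_inside_add_sum (h : SpanningTriangle V E v) :
    #E ≤ #(inside v E) + ∑ w ∈ V with w ∉ Set.range v, #(link v E w) := by
  set W : Finset α := {w ∈ V | w ∉ Set.range v}
  have hsub : E ⊆ (inside v E).image (map v) ∪
      W.biUnion fun w ↦ (link v E w).image fun s ↦ insert w (s.map v) := by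
    intro e he
    rcases h.trace_mem_inside_or he with ⟨ht, heq⟩ | ⟨w, hw, hwv, hs, heq⟩
    · exact mem_union_left _ (mem_image.2 ⟨_, ht, heq⟩)
    · exact mem_union_right _ <|
        mem_biUnion.2 ⟨w, mem_filter.2 ⟨hw, hwv⟩, mem_image.2 ⟨_, hs, heq⟩⟩
  calc #E ≤ _ := card_le_card hsub
    _ ≤ _ := card_union_le _ _
    _ ≤ _ := add_le_add card_image_le (card_biUnion_le.trans (sum_le_sum fun w _ ↦ card_image_le))

theorem card_filter_notMem_range (h : SpanningTriangle V E v) :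
    #{w ∈ V | w ∉ Set.range v} = #V - 6 := by
  have hrange : ({w ∈ V | w ∈ Set.range v} : Finset α) = univ.map v := by
    ext a
    simp only [mem_filter, mem_map, mem_univ, true_and, Set.mem_range, and_iff_right_iff_imp]
    rintro ⟨u, rfl⟩
    exact h.apply_mem u
  have := card_filter_add_card_filter_not (s := V) (fun w ↦ w ∈ Set.range v)
  rw [hrange, card_map, card_univ, show Fintype.card TriangleVertex = 6 from rfl] at this
  lia

theorem card_le_of_card_link_le_three (h : SpanningTriangle V E v) (hw : w ∈ V)
    (hwv : w ∉ Set.range v)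
    (hthree : ∀ a ∈ V, a ∉ Set.range v → a ≠ w → #(link v E a) ≤ 3) :
    #E ≤ #(inside v E) + #(link v E w) + 3 * (#V - 7) := by
  have hwW : w ∈ ({a ∈ V | a ∉ Set.range v} : Finset α) := mem_filter.2 ⟨hw, hwv⟩
  have hsum := sum_le_card_nsmul (({a ∈ V | a ∉ Set.range v} : Finset α).erase w)
    (fun a ↦ #(link v E a)) 3 fun a ha ↦ by
      rw [mem_erase, mem_filter] at ha
      exact hthree a ha.2.1 ha.2.2 ha.1
  rw [card_erase_of_mem hwW, h.card_filter_notMem_range, smul_eq_mul] at hsum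
  have hle := h.card_le_card_inside_add_sum
  rw [← add_sum_erase _ _ hwW] at hle
  lia

theorem exists_forall_card_link_le_three (h : SpanningTriangle V E v) (hV : 7 ≤ #V) :
    ∃ w ∈ V, w ∉ Set.range v ∧
      ∀ a ∈ V, a ∉ Set.range v → a ≠ w → #(link v E a) ≤ 3 := by
  by_cases hfour : ∃ w ∈ V, w ∉ Set.range v ∧ 3 < #(link v E w)
  · obtain ⟨w, hw, hwv, hlink⟩ := hfour
    exact ⟨w, hw, hwv, fun a _ hav haw ↦ h.card_link_le_three hwv hav haw.symm hlink⟩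
  · push Not at hfour
    have hW : ({w ∈ V | w ∉ Set.range v} : Finset α).Nonempty := by
      rw [← card_pos, h.card_filter_notMem_range]
      lia
    obtain ⟨w, hw⟩ := hW
    rw [mem_filter] at hw
    exact ⟨w, hw.1, hw.2, fun a ha hav _ ↦ hfour a ha hav⟩

theorem card_le (h : SpanningTriangle V E v) (hV : 7 ≤ #V) : #E ≤ 3 * #V - 8 := by
  obtain ⟨w, hw, hwv, hthree⟩ := h.exists_forall_card_link_le_three hV
  have hle := h.card_le_of_card_link_le_three hw hwv hthree
  rcases h.card_inside_add_card_link_le_or hwv (h.link_nonempty hw hwv) with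
    hsum | ⟨hinside, hlink | ⟨i, hlink⟩⟩
  · lia
  · rw [hlink, card_bases] at hle
    lia
  · rw [hlink, card_cevians] at hle
    lia

/-- By `card_inside_add_card_link_le_or`, equality makes the link of the vertex singled out in the
count exceptional. Then no link has more than three elements, so every vertex can be singled out. -/
theorem link_eq_bases_or_link_eq_cevians (h : SpanningTriangle V E v) (hV : 7 ≤ #V)
    (hE : #E = 3 * #V - 8) :
    (∀ w ∈ V, w ∉ Set.range v → link v E w = bases) ∨
      ∃ i, ∀ w ∈ V, w ∉ Set.range v → link v E w = cevians i := by
  have hexceptional {w} (hw : w ∈ V) (hwv : w ∉ Set.range v)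
      (hthree : ∀ a ∈ V, a ∉ Set.range v → a ≠ w → #(link v E a) ≤ 3) :
      link v E w = bases ∨ ∃ i, link v E w = cevians i := by
    have := h.card_le_of_card_link_le_three hw hwv hthree
    have hor := h.card_inside_add_card_link_le_or hwv (h.link_nonempty hw hwv)
    exact (hor.resolve_left (by lia)).2
  obtain ⟨w₀, hw₀, hwv₀, hthree₀⟩ := h.exists_forall_card_link_le_three hV
  have hthree : ∀ a ∈ V, a ∉ Set.range v → #(link v E a) ≤ 3 := by
    intro a ha hav
    obtain rfl | hne := eq_or_ne a w₀
    · rcases hexceptional hw₀ hwv₀ hthree₀ with hlink | ⟨i, hlink⟩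
      · rw [hlink, card_bases]
      · rw [hlink, card_cevians]
    · exact hthree₀ a ha hav hne
  have hall {w} (hw : w ∈ V) (hwv : w ∉ Set.range v) :=
    hexceptional hw hwv fun a ha hav _ ↦ hthree a ha hav
  by_cases hcevians : ∃ w ∈ V, w ∉ Set.range v ∧ ∃ i, link v E w = cevians i
  · obtain ⟨w, hw, hwv, i, hlink⟩ := hcevians
    refine .inr ⟨i, fun a ha hav ↦ ?_⟩
    obtain rfl | hne := eq_or_ne a w
    · exact hlink
    have hsub := h.link_subset_cevians hwv hav hne.symm (hlink ▸ median_mem_cevians i)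
    refine eq_of_subset_of_card_le hsub ?_
    rcases hall ha hav with heq | ⟨j, heq⟩
    · rw [heq, card_bases, card_cevians]
    · rw [heq, card_cevians, card_cevians]
  · push Not at hcevians
    exact .inl fun w hw hwv ↦ (hall hw hwv).resolve_right fun ⟨i, hi⟩ ↦ hcevians w hw hwv i hi

theorem two_le_card_inter_corners (h : SpanningTriangle V E v) (hV : 7 ≤ #V)
    (hlink : ∀ w ∈ V, w ∉ Set.range v → link v E w = bases) (he : e ∈ E) :
    2 ≤ #(e ∩ corners.map v) := by
  rw [inter_map_eq, card_map]
  obtain ⟨w, hw, hwv, -⟩ := h.exists_forall_card_link_le_three hV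
  rcases h.trace_mem_inside_or he with ⟨ht, -⟩ | ⟨a, ha, hav, hs, -⟩
  · exact two_le_card_inter_corners_of_not_clash _ (h.card_of_mem_inside ht) fun s hs ↦
      h.not_clash_of_mem_link hwv (hlink w hw hwv ▸ hs) ht
  · exact two_le_card_inter_corners_of_mem_bases _ (hlink a ha hav ▸ hs)

theorem eq_side_or_mem_and_not_disjoint (h : SpanningTriangle V E v) (hV : 7 ≤ #V) {i : Fin 3}
    (hlink : ∀ w ∈ V, w ∉ Set.range v → link v E w = cevians i) (he : e ∈ E) :
    e = (side i).map v ∨ v (.inl i) ∈ e ∧ ¬Disjoint e ((side i).map v) := by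
  rw [disjoint_map_iff, ← mem_trace]
  obtain ⟨w, hw, hwv, -⟩ := h.exists_forall_card_link_le_three hV
  rcases h.trace_mem_inside_or he with ⟨ht, heq⟩ | ⟨a, ha, hav, hs, -⟩
  · refine (eq_side_or_of_not_clash i _ (h.card_of_mem_inside ht) fun s hs ↦
      h.not_clash_of_mem_link hwv (hlink w hw hwv ▸ hs) ht).imp_left fun hside ↦ ?_
    rw [← hside, heq]
  · exact .inr (inl_mem_and_not_disjoint_of_mem_cevians i _ (hlink a ha hav ▸ hs))

end SpanningTriangle

theorem card_filter_powersetCard_inter {α : Type*} [DecidableEq α] {V B : Finset α} (hB : B ⊆ V)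
    (P : Finset α → Prop) [DecidablePred P] (k : ℕ) :
    #{e ∈ V.powersetCard k | P (e ∩ B)} =
      ∑ j ∈ range (k + 1), #{s ∈ B.powersetCard j | P s} * (#V - #B).choose (k - j) := by
  have hmaps : ∀ e ∈ ({e ∈ V.powersetCard k | P (e ∩ B)} : Finset _), #(e ∩ B) ∈ range (k + 1) := by
    intro e he
    rw [mem_range, Nat.lt_succ_iff, ← (mem_powersetCard.1 (mem_filter.1 he).1).2]
    exact card_le_card inter_subset_left
  rw [card_eq_sum_card_fiberwise hmaps]
  refine sum_congr rfl fun j hj ↦ ?_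
  rw [← card_sdiff_of_subset hB, ← card_powersetCard, ← card_product]
  have hinter {x : Finset α × Finset α} (h₁ : x.1 ⊆ B) (h₂ : x.2 ⊆ V \ B) :
      (x.1 ∪ x.2) ∩ B = x.1 ∧ (x.1 ∪ x.2) \ B = x.2 := by
    constructor <;> ext <;> grind
  refine card_nbij' (fun e ↦ (e ∩ B, e \ B)) (fun x ↦ x.1 ∪ x.2) ?_ ?_ ?_ ?_
  · intro e he
    have := card_inter_add_card_sdiff e B
    simp only [coe_filter, mem_filter, mem_powersetCard, Set.mem_ofPred_eq, coe_product,
      Set.mem_prod, mem_coe] at he ⊢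
    exact ⟨⟨⟨inter_subset_right, he.2⟩, he.1.2⟩, sdiff_subset_sdiff he.1.1.1 subset_rfl, by lia⟩
  · intro x hx
    simp only [coe_filter, mem_filter, mem_powersetCard, Set.mem_ofPred_eq, coe_product,
      Set.mem_prod, mem_coe] at hx ⊢
    obtain ⟨h₁, h₂⟩ := hinter hx.1.1.1 hx.2.1
    have hdisj : Disjoint x.1 x.2 := disjoint_sdiff.mono hx.1.1.1 hx.2.1
    rw [h₁, card_union_of_disjoint hdisj]
    rw [mem_range] at hj
    exact ⟨⟨⟨union_subset (hx.1.1.1.trans hB) (hx.2.1.trans sdiff_subset), by lia⟩, hx.1.2⟩,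
      hx.1.1.2⟩
  · exact fun e _ ↦ (union_comm _ _).trans (sdiff_union_inter e B)
  · intro x hx
    simp only [mem_filter, mem_powersetCard, coe_product, Set.mem_prod, mem_coe] at hx
    obtain ⟨h₁, h₂⟩ := hinter hx.1.1.1 hx.2.1
    exact Prod.ext h₁ h₂

theorem length_le_card_of_nodup {α : Type*} {V : Finset α} {l : List α} (hl : l.Nodup)
    (hV : ∀ x ∈ l, x ∈ V) : l.length ≤ #V :=
  card_le_card (s := (⟨l, Multiset.coe_nodup.2 hl⟩ : Finset α)) fun x hx ↦ hV x hx

theorem exists_injOn_image_eq_of_nodup {α : Type*} [DecidableEq α] [Inhabited α] {V : Finset α}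
    {l : List α} (hl : l.Nodup) (hV : ∀ x ∈ l, x ∈ V) :
    ∃ φ : ℕ → α, Set.InjOn φ (range #V) ∧ (range #V).image φ = V ∧
      ∀ i, ∀ hi : i < l.length, φ i = l[i] := by
  have hlen := length_le_card_of_nodup hl hV
  have hmem {i} (hi : i < l.length) : l.getD i default ∈ V := by
    rw [List.getD_eq_getElem _ _ hi]
    exact hV _ (List.getElem_mem hi)
  obtain ⟨g, hg⟩ := exists_equiv_extend_of_card_eq (Fintype.card_fin #V)
    (s := {i | (i : ℕ) < l.length}) (f := fun i ↦ l.getD i default)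
    (image_subset_iff.2 fun i hi ↦ hmem (mem_filter.1 hi).2)
    (fun i hi j hj hij ↦ by
      simp only [coe_filter_univ, Set.mem_ofPred_eq] at hi hj
      simp only [List.getD_eq_getElem _ _ hi, List.getD_eq_getElem _ _ hj] at hij
      exact Fin.ext (hl.getElem_inj_iff.1 hij))
  refine ⟨fun i ↦ if hi : i < #V then g ⟨i, hi⟩ else default,
    fun i hi j hj hij ↦ ?_, ?_, fun i hi ↦ ?_⟩
  · rw [coe_range, Set.mem_Iio] at hi hj
    simpa [hi, hj, Subtype.ext_iff.symm] using hij
  · ext x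
    constructor
    · rintro hx
      obtain ⟨i, hi, rfl⟩ := mem_image.1 hx
      simp [mem_range.1 hi]
    · intro hx
      exact mem_image.2 ⟨g.symm ⟨x, hx⟩, by simp⟩
  · simp only [hi.trans_le hlen, dite_true]
    rw [hg _ (mem_filter.2 ⟨mem_univ _, hi⟩), List.getD_eq_getElem _ _ hi]

namespace ThreeGraph

variable {F H : ThreeGraph}

theorem IsoCopy.card_edges_eq (h : IsoCopy F H) (hF : F.IsValid) : #H.edges = #F.edges := by
  obtain ⟨f, hf, -, hedges⟩ := h
  rw [← hedges, card_image_of_injOn]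
  exact (image_injOn_powerset_of_injOn hf).mono fun e he ↦ mem_powerset.2 (hF e he).2

theorem isoCopy_of_forall_image_mem (hH : H.IsValid) {φ : ℕ → ℕ} (hφ : Set.InjOn φ F.verts)
    (himage : F.verts.image φ = H.verts) (hcard : #F.edges ≤ #H.edges)
    (hedges : ∀ e ⊆ F.verts, e.image φ ∈ H.edges → e ∈ F.edges) : IsoCopy F H := by
  refine ⟨φ, hφ, himage, Eq.symm <| eq_of_subset_of_card_le (fun e he ↦ ?_)
    (card_image_le.trans hcard)⟩
  obtain ⟨t, ht, rfl⟩ := subset_image_iff.1 (himage ▸ (hH e he).2)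
  exact mem_image_of_mem _ (hedges t ht he)

end ThreeGraph

section ExtremalGraphs

variable {n : ℕ}

theorem triple_subset_range (hn : 3 ≤ n) : ({0, 1, 2} : Finset ℕ) ⊆ range n :=
  (by decide : ({0, 1, 2} : Finset ℕ) ⊆ range 3).trans (range_subset_range.2 hn)

theorem edges_G1 (hn : 3 ≤ n) : (G1 n).edges =
    {e ∈ (range n).powersetCard 3 | e = {0, 1, 2} ∨ 3 ∈ e ∧ (e ∩ {0, 1, 2}).Nonempty} := by
  have hbase : ({0, 1, 2} : Finset ℕ) ∈ (range n).powersetCard 3 :=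
    mem_powersetCard.2 ⟨triple_subset_range hn, rfl⟩
  grind [G1]

theorem edges_G2 (hn : 3 ≤ n) :
    (G2 n).edges = {e ∈ (range n).powersetCard 3 | 2 ≤ #(e ∩ {0, 1, 2})} := by
  have hbase : ({0, 1, 2} : Finset ℕ) ∈ (range n).powersetCard 3 :=
    mem_powersetCard.2 ⟨triple_subset_range hn, rfl⟩
  ext e
  have heq (he : #e = 3) : e = {0, 1, 2} ↔ #(e ∩ {0, 1, 2}) = 3 := by
    refine ⟨by rintro rfl; rfl, fun h ↦ ?_⟩
    have hsub : e ∩ {0, 1, 2} = e := eq_of_subset_of_card_le inter_subset_left (by rw [he, h])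
    exact eq_of_subset_of_card_le (inter_eq_left.1 hsub) he.ge
  have hle : #(e ∩ {0, 1, 2}) ≤ 3 := card_le_card inter_subset_right
  rw [G2, mem_insert, mem_filter, mem_filter]
  grind

theorem isValid_G1 (hn : 3 ≤ n) : (G1 n).IsValid := fun _ he ↦
  (mem_powersetCard.1 (mem_filter.1 (edges_G1 hn ▸ he)).1).symm

theorem isValid_G2 (hn : 3 ≤ n) : (G2 n).IsValid := fun _ he ↦
  (mem_powersetCard.1 (mem_filter.1 (edges_G2 hn ▸ he)).1).symm

theorem card_edges_G1 (hn : 4 ≤ n) : #(G1 n).edges = 3 * n - 8 := by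
  let P (s : Finset ℕ) : Prop := s = {0, 1, 2} ∨ 3 ∈ s ∧ (s ∩ {0, 1, 2}).Nonempty
  have hB : ({0, 1, 2, 3} : Finset ℕ) ⊆ range n :=
    (by decide : ({0, 1, 2, 3} : Finset ℕ) ⊆ range 4).trans (range_subset_range.2 hn)
  have hedges : (G1 n).edges = {e ∈ (range n).powersetCard 3 | P (e ∩ {0, 1, 2, 3})} := by
    rw [edges_G1 (by lia)]
    refine filter_congr fun e he ↦ ?_
    have hthree : #e = 3 := (mem_powersetCard.1 he).2
    have hbase : e = {0, 1, 2} ↔ e ∩ {0, 1, 2, 3} = {0, 1, 2} := by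
      refine ⟨by rintro rfl; rfl, fun h ↦ Eq.symm (eq_of_subset_of_card_le ?_ hthree.le)⟩
      exact h ▸ inter_subset_left
    have hinter : e ∩ {0, 1, 2, 3} ∩ {0, 1, 2} = e ∩ {0, 1, 2} := by
      rw [inter_assoc, inter_eq_right.2 (by decide : ({0, 1, 2} : Finset ℕ) ⊆ {0, 1, 2, 3})]
    simp [P, hbase, hinter]
  have hcounts : #{s ∈ powersetCard 0 {0, 1, 2, 3} | P s} = 0 ∧
      #{s ∈ powersetCard 1 {0, 1, 2, 3} | P s} = 0 ∧
      #{s ∈ powersetCard 2 {0, 1, 2, 3} | P s} = 3 ∧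
      #{s ∈ powersetCard 3 {0, 1, 2, 3} | P s} = 4 := by decide
  have hfour : #({0, 1, 2, 3} : Finset ℕ) = 4 := rfl
  simp only [hedges, card_filter_powersetCard_inter hB P, sum_range_succ, range_zero, sum_empty,
    hcounts, card_range, hfour, zero_mul, zero_add, Nat.reduceSub, Nat.choose_one_right,
    Nat.choose_zero_right, mul_one]
  lia

theorem card_edges_G2 (hn : 3 ≤ n) : #(G2 n).edges = 3 * n - 8 := by
  have hcounts : #{s ∈ powersetCard 0 ({0, 1, 2} : Finset ℕ) | 2 ≤ #s} = 0 ∧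
      #{s ∈ powersetCard 1 ({0, 1, 2} : Finset ℕ) | 2 ≤ #s} = 0 ∧
      #{s ∈ powersetCard 2 ({0, 1, 2} : Finset ℕ) | 2 ≤ #s} = 3 ∧
      #{s ∈ powersetCard 3 ({0, 1, 2} : Finset ℕ) | 2 ≤ #s} = 1 := by decide
  have hbase : #({0, 1, 2} : Finset ℕ) = 3 := rfl
  simp only [edges_G2 hn, card_filter_powersetCard_inter (triple_subset_range hn) (2 ≤ #·),
    sum_range_succ, range_zero, sum_empty, hcounts, card_range, hbase, zero_mul, zero_add,
    Nat.reduceSub, Nat.choose_one_right, Nat.choose_zero_right, mul_one]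
  lia

variable {H : ThreeGraph} {T : Finset ℕ} {x : ℕ}

theorem isoCopy_G2 (hH : H.IsValid) (hT : #T = 3) (hTH : T ⊆ H.verts)
    (hcard : #(G2 #H.verts).edges ≤ #H.edges) (hedges : ∀ e ∈ H.edges, 2 ≤ #(e ∩ T)) :
    ThreeGraph.IsoCopy (G2 #H.verts) H := by
  have hn : 3 ≤ #H.verts := hT ▸ card_le_card hTH
  obtain ⟨a, b, c, hab, hac, hbc, rfl⟩ := card_eq_three.1 hT
  obtain ⟨φ, hφ, himage, hlabel⟩ := exists_injOn_image_eq_of_nodup (V := H.verts)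
    (l := [a, b, c]) (by simp [*]) (by simpa [insert_subset_iff] using hTH)
  have hbase : image φ {0, 1, 2} = {a, b, c} := by
    simp [image_insert, hlabel 0, hlabel 1, hlabel 2]
  refine ThreeGraph.isoCopy_of_forall_image_mem hH hφ himage hcard fun e he heH ↦ ?_
  have hthree : #e = 3 := by
    rw [← (hH _ heH).1, card_image_of_injOn (hφ.mono he)]
  refine edges_G2 hn ▸ mem_filter.2 ⟨mem_powersetCard.2 ⟨he, hthree⟩, ?_⟩
  have := hedges _ heH
  rw [← hbase, ← image_inter_of_injOn] at this
  · exact this.trans card_image_le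
  · exact hφ.mono (by exact_mod_cast union_subset he (triple_subset_range hn))

theorem isoCopy_G1 (hH : H.IsValid) (hT : #T = 3) (hTH : T ⊆ H.verts)
    (hx : x ∈ H.verts) (hxT : x ∉ T) (hcard : #(G1 #H.verts).edges ≤ #H.edges)
    (hedges : ∀ e ∈ H.edges, e = T ∨ x ∈ e ∧ ¬Disjoint e T) :
    ThreeGraph.IsoCopy (G1 #H.verts) H := by
  have hfour : 4 ≤ #H.verts := by
    simpa [card_insert_of_notMem hxT, hT] using card_le_card (insert_subset hx hTH)
  have hn : 3 ≤ #H.verts := by lia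
  obtain ⟨a, b, c, hab, hac, hbc, rfl⟩ := card_eq_three.1 hT
  obtain ⟨φ, hφ, himage, hlabel⟩ := exists_injOn_image_eq_of_nodup (V := H.verts)
    (l := [a, b, c, x]) (by simp; grind) (by simpa [insert_subset_iff, hx] using hTH)
  have hbase : image φ {0, 1, 2} = {a, b, c} := by
    simp [image_insert, hlabel 0, hlabel 1, hlabel 2]
  have hthree : φ 3 = x := hlabel 3 (by simp)
  refine ThreeGraph.isoCopy_of_forall_image_mem hH hφ himage hcard fun e he heH ↦ ?_
  have hcard_e : #e = 3 := by
    rw [← (hH _ heH).1, card_image_of_injOn (hφ.mono he)]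
  refine edges_G1 hn ▸ mem_filter.2 ⟨mem_powersetCard.2 ⟨he, hcard_e⟩, ?_⟩
  refine (hedges _ heH).imp (fun heq ↦ ?_) (fun ⟨hxe, hdisj⟩ ↦ ⟨?_, ?_⟩)
  · exact image_injOn_powerset_of_injOn hφ (mem_powerset.2 he)
      (mem_powerset.2 (triple_subset_range hn)) (heq.trans hbase.symm)
  · obtain ⟨i, hi, hix⟩ := mem_image.1 hxe
    exact hφ (he hi) (mem_range.2 (by lia)) (hix.trans hthree.symm) ▸ hi
  · rw [← hbase, disjoint_iff_inter_eq_empty, ← image_inter_of_injOn, image_eq_empty] at hdisj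
    · exact nonempty_iff_ne_empty.2 hdisj
    · exact hφ.mono (by exact_mod_cast union_subset he (triple_subset_range hn))

end ExtremalGraphs

/-- A labelling of `triangleC` by the vertices of the abstract triangle; the edges `{2, 3, 4}`,
`{4, 5, 0}` and `{0, 1, 2}` become the sides 0, 1 and 2. -/
def triangleLabel : TriangleVertex → ℕ :=
  Sum.elim (fun i ↦ 2 * i) fun i ↦ (2 * i + 3) % 6

theorem triangleLabel_mem_verts : ∀ u, triangleLabel u ∈ triangleC.verts := by decide

theorem triangleLabel_injective : triangleLabel.Injective := by decide

theorem image_triangleLabel_side_mem_edges :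
    ∀ i, (side i).image triangleLabel ∈ triangleC.edges := by
  decide

namespace ThreeGraph

variable {H : ThreeGraph}

theorem IsValid.containsCopy_pathP_of_isLoosePath (hH : H.IsValid) {e f g : Finset ℕ}
    (he : e ∈ H.edges) (hf : f ∈ H.edges) (hg : g ∈ H.edges) (hefg : IsLoosePath e f g) :
    H.ContainsCopy pathP := by
  obtain ⟨a, b, c, m, d, p, q, hnodup, rfl, rfl, rfl⟩ :=
    hefg.exists_nodup (hH e he).1 (hH f hf).1 (hH g hg).1
  have hmem : ∀ x ∈ [a, b, c, m, d, p, q], x ∈ H.verts := by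
    have he_sub := (hH _ he).2
    have hf_sub := (hH _ hf).2
    have hg_sub := (hH _ hg).2
    simp only [insert_subset_iff, singleton_subset_iff] at he_sub hf_sub hg_sub
    simp [*]
  obtain ⟨φ, hφ, himage, hlabel⟩ := exists_injOn_image_eq_of_nodup hnodup hmem
  have hverts : pathP.verts ⊆ range #H.verts :=
    range_subset_range.2 (length_le_card_of_nodup hnodup hmem)
  refine ⟨φ, hφ.mono hverts, fun i hi ↦ himage ▸ mem_image_of_mem φ (hverts hi), ?_⟩
  simp [pathP, image_insert, hlabel 0, hlabel 1, hlabel 2, hlabel 3, hlabel 4, hlabel 5, hlabel 6,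
    he, hf, hg]

theorem exists_spanningTriangle (hH : H.IsValid) (hconn : H.Connected) (hP : H.Free pathP)
    (hC : H.ContainsCopy triangleC) :
    ∃ v : TriangleVertex ↪ ℕ, SpanningTriangle H.verts H.edges v := by
  obtain ⟨f, hf, -, hedges⟩ := hC
  let v : TriangleVertex ↪ ℕ := ⟨f ∘ triangleLabel, fun a b hab ↦
    triangleLabel_injective <| hf (triangleLabel_mem_verts a) (triangleLabel_mem_verts b) hab⟩
  have h : PathFreeWithTriangle H.edges v :=
    { card_eq := fun e he ↦ (hH e he).1
      not_isLoosePath := fun e he f hf g hg hefg ↦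
        hP (hH.containsCopy_pathP_of_isLoosePath he hf hg hefg)
      side_mem := fun i ↦ by
        rw [map_eq_image]
        have := hedges _ (image_triangleLabel_side_mem_edges i)
        rwa [image_image] at this }
  exact ⟨v, h.spanningTriangle (fun e he ↦ (hH e he).2) hconn⟩

end ThreeGraph

/-- Every connected `P`-free 3-graph on `n ≥ 7` vertices containing the triangle `C`
has at most `3n - 8` edges, with equality exactly for `G₁(n)` and `G₂(n)`. -/
theorem conn_turan_triangle (n : ℕ) (hn : 7 ≤ n) (H : ThreeGraph)
    (hval : H.IsValid) (hcard : H.verts.card = n) (hconn : H.Connected)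
    (hP : H.Free pathP) (hC : H.ContainsCopy triangleC) :
    H.edges.card ≤ 3 * n - 8 ∧
    (H.edges.card = 3 * n - 8 ↔
      (ThreeGraph.IsoCopy (G1 n) H ∨ ThreeGraph.IsoCopy (G2 n) H)) := by
  subst hcard
  obtain ⟨v, h⟩ := ThreeGraph.exists_spanningTriangle hval hconn hP hC
  refine ⟨h.card_le hn, fun hE ↦ ?_, ?_⟩
  · rcases h.link_eq_bases_or_link_eq_cevians hn hE with hlink | ⟨i, hlink⟩
    · exact .inr <| isoCopy_G2 (T := corners.map v) hval rfl
        (map_subset_iff_subset_preimage.2 fun u _ ↦ mem_preimage.2 (h.apply_mem u))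
        (hE ▸ (card_edges_G2 (by lia)).le) fun e he ↦ h.two_le_card_inter_corners hn hlink he
    · exact .inl <| isoCopy_G1 (T := (side i).map v) (x := v (.inl i)) hval
        ((card_map v).trans (card_side i)) (h.subset _ (h.side_mem i)) (h.apply_mem _)
        (by simpa only [mem_map'] using inl_notMem_side i) (hE ▸ (card_edges_G1 (by lia)).le)
        fun e he ↦ h.eq_side_or_mem_and_not_disjoint hn hlink he
  · rintro (hiso | hiso)
    · rw [hiso.card_edges_eq (isValid_G1 (by lia)), card_edges_G1 (by lia)]
    · rw [hiso.card_edges_eq (isValid_G2 (by lia)), card_edges_G2 (by lia)]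
end

section
/- For n ≥ 6, let h(n) denote the maximum number of edges of a {P,C}-free 3-graph on n vertices that contains a copy of M. Then h(n) = 2n − 4 for 6 ≤ n ≤ 9, h(10) = 20, and h(n) = 4 + binom(n−4, 2) for n ≥ 11; moreover for n ≥ 11 a {P,C}-free n-vertex 3-graph containing a copy of M has 4 + binom(n−4,2) edges if and only if it is isomorphic to the comet Co(n). -/
/-- The set of edge numbers of `{P,C}`-free 3-graphs on `n` vertices containing `M`. -/
def condTuranSet (n : ℕ) : Set ℕ :=
  {m : ℕ | ∃ H : ThreeGraph, H.IsValid ∧ H.verts.card = n ∧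
    H.Free pathP ∧ H.Free triangleC ∧ H.ContainsCopy matchingM ∧ H.edges.card = m}

namespace CondTuran

open Finset

section Numbers

/-- The value of `ex(n; {P,C} | M)` for `6 ≤ n`. -/
def condTuranNumber (n : ℕ) : ℕ :=
  if n ≤ 9 then 2 * n - 4 else if n = 10 then 20 else 4 + (n - 4).choose 2

/-- The bound proved for triple systems other than comets; it falls short of `condTuranNumber n`
exactly when `11 ≤ n`. -/
def nonCometBound (n : ℕ) : ℕ :=
  if n ≤ 9 then 2 * n - 4 else if n = 10 then 20 else 3 + (n - 4).choose 2

/-- A bound for all `{P,C}`-free triple systems on `n` vertices, with or without a copy of `M`. -/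
def pcFreeBound (n : ℕ) : ℕ :=
  if n ≤ 5 then n.choose 3 else (n - 1).choose 2

theorem choose_two_add (m n : ℕ) : (m + n).choose 2 = m.choose 2 + n.choose 2 + m * n := by
  induction n with
  | zero => simp
  | succ n ih =>
    rw [← add_assoc, Nat.choose_succ_succ', Nat.choose_succ_succ' n, ih, Nat.choose_one_right,
      Nat.choose_one_right]
    ring

theorem condTuranNumber_of_eleven_le {n : ℕ} (hn : 11 ≤ n) :
    condTuranNumber n = 4 + (n - 4).choose 2 := by
  rw [condTuranNumber, if_neg (by omega), if_neg (by omega)]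

theorem nonCometBound_of_eleven_le {n : ℕ} (hn : 11 ≤ n) :
    nonCometBound n = 3 + (n - 4).choose 2 := by
  rw [nonCometBound, if_neg (by omega), if_neg (by omega)]

theorem nonCometBound_lt_condTuranNumber {n : ℕ} (hn : 11 ≤ n) :
    nonCometBound n < condTuranNumber n := by
  rw [condTuranNumber_of_eleven_le hn, nonCometBound_of_eleven_le hn]
  omega

theorem nonCometBound_le_condTuranNumber (n : ℕ) : nonCometBound n ≤ condTuranNumber n := by
  obtain hn | hn := Nat.lt_or_ge n 11
  · interval_cases n <;> decide
  · exact (nonCometBound_lt_condTuranNumber hn).le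

theorem four_add_choose_two_le_condTuranNumber {n : ℕ} (hn : 6 ≤ n) :
    4 + (n - 4).choose 2 ≤ condTuranNumber n := by
  obtain hn' | hn' := Nat.lt_or_ge n 11
  · interval_cases n <;> decide
  · exact (condTuranNumber_of_eleven_le hn').ge

theorem three_add_choose_two_le_nonCometBound {n : ℕ} (hn : 6 ≤ n) :
    3 + (n - 4).choose 2 ≤ nonCometBound n := by
  obtain hn' | hn' := Nat.lt_or_ge n 11
  · interval_cases n <;> decide
  · exact (nonCometBound_of_eleven_le hn').ge

theorem condTuranNumber_le_seven_add_choose_two {n : ℕ} (hn : 6 ≤ n) :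
    condTuranNumber n ≤ 7 + (n - 4).choose 2 := by
  obtain hn' | hn' := Nat.lt_or_ge n 11
  · interval_cases n <;> decide
  · rw [condTuranNumber_of_eleven_le hn']
    omega

theorem pcFreeBound_le_choose_two_add {n : ℕ} (hn : 3 ≤ n) :
    pcFreeBound n ≤ (n - 1).choose 2 + 2 * (n - 3) := by
  obtain hn' | hn' := Nat.lt_or_ge n 6
  · interval_cases n <;> decide
  · rw [pcFreeBound, if_neg (by omega)]
    omega

theorem two_mul_sub_four_le_nonCometBound {n : ℕ} (hn : 6 ≤ n) : 2 * n - 4 ≤ nonCometBound n := by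
  obtain hn' | hn' := Nat.lt_or_ge n 11
  · interval_cases n <;> decide
  · obtain ⟨k, rfl⟩ := Nat.exists_eq_add_of_le' hn'
    have h7 : Nat.choose 7 2 = 21 := rfl
    rw [nonCometBound_of_eleven_le hn', show k + 11 - 4 = k + 7 by omega, choose_two_add]
    omega

theorem condTuranNumber_le_pcFreeBound {n : ℕ} (hn : 6 ≤ n) :
    condTuranNumber n ≤ pcFreeBound n := by
  obtain hn' | hn' := Nat.lt_or_ge n 11
  · interval_cases n <;> decide
  · obtain ⟨k, rfl⟩ := Nat.exists_eq_add_of_le' hn'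
    have h3 : Nat.choose 3 2 = 3 := rfl
    rw [condTuranNumber_of_eleven_le hn', pcFreeBound, if_neg (by omega),
      show k + 11 - 1 = k + 7 + 3 by omega, show k + 11 - 4 = k + 7 by omega,
      choose_two_add (k + 7) 3]
    omega

theorem condTuranNumber_add_le_nonCometBound {m d : ℕ} (hm : 6 ≤ m) (hd : 2 ≤ d) :
    condTuranNumber m + d + 4 ≤ nonCometBound (m + d + 1) := by
  obtain hmd | hmd := Nat.lt_or_ge (m + d) 11
  · have : m ≤ 8 := by omega
    have : d ≤ 4 := by omega
    interval_cases m <;> interval_cases d <;> first | omega | decide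
  · have hle := condTuranNumber_le_seven_add_choose_two hm
    obtain ⟨k, rfl⟩ := Nat.exists_eq_add_of_le' hm
    obtain ⟨e, rfl⟩ := Nat.exists_eq_add_of_le' hd
    have h3 : Nat.choose 3 2 = 3 := rfl
    rw [show k + 6 - 4 = k + 2 by omega] at hle
    rw [nonCometBound_of_eleven_le (by omega),
      show k + 6 + (e + 2) + 1 - 4 = (k + 2) + (e + 3) by omega, choose_two_add (k + 2) (e + 3),
      choose_two_add e 3]
    nlinarith [Nat.zero_le (k * e)]

theorem condTuranNumber_add_sub_four_le_nonCometBound {n : ℕ} (hn : 6 ≤ n) :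
    condTuranNumber n + (n - 4) ≤ nonCometBound (n + 2) := by
  obtain hn' | hn' := Nat.lt_or_ge n 11
  · interval_cases n <;> decide
  · obtain ⟨k, rfl⟩ := Nat.exists_eq_add_of_le' hn'
    rw [condTuranNumber_of_eleven_le hn', nonCometBound_of_eleven_le (by omega),
      show k + 11 + 2 - 4 = k + 7 + 2 by omega, show k + 11 - 4 = k + 7 by omega,
      choose_two_add (k + 7) 2, Nat.choose_self]
    omega

theorem nonCometBound_add_self_le {n : ℕ} (hn : 8 ≤ n) :
    nonCometBound n + n ≤ nonCometBound (n + 2) := by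
  obtain hn' | hn' := Nat.lt_or_ge n 11
  · interval_cases n <;> decide
  · obtain ⟨k, rfl⟩ := Nat.exists_eq_add_of_le' hn'
    rw [nonCometBound_of_eleven_le hn', nonCometBound_of_eleven_le (by omega),
      show k + 11 + 2 - 4 = k + 7 + 2 by omega, show k + 11 - 4 = k + 7 by omega,
      choose_two_add (k + 7) 2, Nat.choose_self]
    omega

theorem pcFreeBound_add_le_nonCometBound {i j : ℕ} (hi : 3 ≤ i) (hj : 3 ≤ j) :
    pcFreeBound i + pcFreeBound j ≤ nonCometBound (i + j) := by
  wlog hij : i ≤ j generalizing i j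
  · rw [add_comm, add_comm i]
    exact this hj hi (by omega)
  obtain hj' | hj' := Nat.lt_or_ge j 9
  · interval_cases j <;> interval_cases i <;> decide
  · have hle := pcFreeBound_le_choose_two_add hi
    obtain ⟨x, rfl⟩ := Nat.exists_eq_add_of_le' hi
    obtain ⟨y, rfl⟩ := Nat.exists_eq_add_of_le' hj'
    rw [show x + 3 - 1 = x + 2 by omega, Nat.add_sub_cancel] at hle
    rw [pcFreeBound.eq_def (y + 9), if_neg (by omega), nonCometBound_of_eleven_le (by omega),
      show x + 3 + (y + 9) - 4 = (x + 2) + (y + 6) by omega, choose_two_add (x + 2) (y + 6),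
      show y + 9 - 1 = y + 6 + 2 by omega, choose_two_add (y + 6) 2, Nat.choose_self]
    nlinarith [Nat.zero_le (x * y)]

theorem add_pcFreeBound_add_le_nonCometBound {i j : ℕ} (hi : 3 ≤ i) (hj : 3 ≤ j) :
    i + j + (pcFreeBound i + pcFreeBound j) ≤ nonCometBound (i + j + 2) := by
  obtain h8 | h8 := Nat.lt_or_ge (i + j) 8
  · have : i ≤ 4 := by omega
    have : j ≤ 4 := by omega
    interval_cases i <;> interval_cases j <;> first | omega | decide
  · have := pcFreeBound_add_le_nonCometBound hi hj
    have := nonCometBound_add_self_le h8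
    omega

theorem add_choose_two_le {d m : ℕ} (hd : 2 ≤ d) (hm : 4 ≤ m) :
    d + m.choose 2 ≤ 2 + (m + d - 2).choose 2 := by
  obtain ⟨k, rfl⟩ := Nat.exists_eq_add_of_le' hd
  rw [show m + (k + 2) - 2 = m + k by omega, choose_two_add]
  nlinarith [Nat.zero_le (k.choose 2)]

end Numbers

variable {α : Type*} {V W U P : Finset α} {E F N : Finset (Finset α)}
  {a b c q w x y z : α} {e f g h k l : Finset α}

section SetFamilies

theorem card_le_choose_of_forall_subset {r : ℕ} (hF : (F : Set (Finset α)).Sized r)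
    (hFV : ∀ e ∈ F, e ⊆ V) (hPV : P ⊆ V) (hPr : #P ≤ r) (hP : ∀ e ∈ F, P ⊆ e) :
    #F ≤ (#V - #P).choose (r - #P) := by
  classical
  exact card_filter_powersetCard_subset P V r hPV hPr ▸ card_le_card fun e he ↦
    mem_filter.2 ⟨mem_powersetCard.2 ⟨hFV e he, hF he⟩, hP e he⟩

theorem exists_injOn_extension {β : Type*} [DecidableEq β] {φ : α → β} {s s' : Finset α}
    {t : Finset β} (hs : s ⊆ s') (hφ : Set.InjOn φ s) (hst : s.image φ ⊆ t)
    (hcard : #s' = #t) :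
    ∃ ψ : α → β, Set.InjOn ψ s' ∧ s'.image ψ = t ∧ Set.EqOn ψ φ s := by
  classical
  obtain ⟨σ, hσ⟩ := exists_equiv_extend_of_card_eq (α := s') (by rwa [Fintype.card_coe])
    (s := s.subtype (· ∈ s')) (f := fun x ↦ φ x) (by grind)
    (fun x hx y hy hxy ↦ Subtype.ext (hφ (by simpa using hx) (by simpa using hy) hxy))
  let ψ (x : α) : β := if hx : x ∈ s' then σ ⟨x, hx⟩ else φ x
  have ψ_eq {x} (hx : x ∈ s') : ψ x = σ ⟨x, hx⟩ := dif_pos hx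
  have ψ_injOn : Set.InjOn ψ s' := fun x hx y hy hxy ↦ by
    rw [ψ_eq hx, ψ_eq hy] at hxy
    exact congrArg Subtype.val (σ.injective (Subtype.ext hxy))
  refine ⟨ψ, ψ_injOn, eq_of_subset_of_card_le ?_ ?_, fun x hx ↦ ?_⟩
  · exact image_subset_iff.2 fun x hx ↦ ψ_eq hx ▸ (σ _).2
  · rw [card_image_of_injOn ψ_injOn, hcard]
  · rw [ψ_eq (hs hx)]
    exact hσ _ (mem_subtype.2 hx)

variable [DecidableEq α]

theorem card_le_choose_of_intersecting {r : ℕ} (hF : (F : Set (Finset α)).Sized r)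
    (hFV : ∀ e ∈ F, e ⊆ V) (hint : (F : Set (Finset α)).Intersecting) (hr : r ≤ #V / 2) :
    #F ≤ (#V - 1).choose (r - 1) := by
  let toFin (e : Finset α) : Finset (Fin #V) := (e.subtype (· ∈ V)).map V.equivFin.toEmbedding
  have subtype_map {e} (he : e ∈ F) : (e.subtype (· ∈ V)).map (.subtype _) = e :=
    subtype_map_of_mem fun _ hx ↦ hFV e he hx
  have toFin_injOn : Set.InjOn toFin F := fun e he f hf hef ↦ by
    rw [← subtype_map he, ← subtype_map hf, map_injective _ hef]
  rw [← card_image_of_injOn toFin_injOn]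
  refine erdos_ko_rado ?_ ?_ hr <;> rw [coe_image]
  · rintro _ ⟨e, he, rfl⟩ _ ⟨f, hf, rfl⟩ hef
    refine hint he hf ?_
    rw [← subtype_map he, ← subtype_map hf]
    exact (disjoint_map _).2 ((disjoint_map _).1 hef)
  · rintro _ ⟨e, he, rfl⟩
    rw [card_map, ← hF he, ← card_map (.subtype _), subtype_map he]

theorem exists_eq_triple_of_mem (he : #e = 3) (hx : x ∈ e) :
    ∃ y z, x ≠ y ∧ x ≠ z ∧ y ≠ z ∧ e = {x, y, z} := by
  obtain ⟨y, z, hyz, heq⟩ := card_eq_two.1 (by rw [card_erase_of_mem hx, he] : #(e.erase x) = 2)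
  have hy : y ∈ e.erase x := by simp [heq]
  have hz : z ∈ e.erase x := by simp [heq]
  exact ⟨y, z, (ne_of_mem_erase hy).symm, (ne_of_mem_erase hz).symm, hyz,
    by rw [← heq, insert_erase hx]⟩

theorem exists_eq_triple_of_mem_of_mem (he : #e = 3) (hx : x ∈ e) (hy : y ∈ e) (hxy : x ≠ y) :
    ∃ z, z ≠ x ∧ z ≠ y ∧ e = {x, y, z} := by
  obtain ⟨u, v, hxu, hxv, huv, rfl⟩ := exists_eq_triple_of_mem he hx
  obtain rfl | rfl : y = u ∨ y = v := by grind
  · exact ⟨v, hxv.symm, huv.symm, rfl⟩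
  · exact ⟨u, hxu.symm, huv, by rw [pair_comm]⟩

theorem inter_eq_singleton_of_not_nontrivial (hx : x ∈ e) (hx' : x ∈ f)
    (hef : ¬ (e ∩ f).Nontrivial) : e ∩ f = {x} :=
  not_not.1 ((nontrivial_iff_ne_singleton (mem_inter.2 ⟨hx, hx'⟩)).not.1 hef)

theorem subset_union_or_inter_subset {r : ℕ} (hk : #k = r + 1) (hef : #(e ∩ f) ≤ r)
    (hek : r ≤ #(k ∩ e)) (hfk : r ≤ #(k ∩ f)) : k ⊆ e ∪ f ∨ e ∩ f ⊆ k := by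
  by_contra! hcon
  obtain ⟨u, huk, hu⟩ := not_subset.1 hcon.1
  have hcard : #(k.erase u) = r := by rw [card_erase_of_mem huk, hk, Nat.add_sub_cancel]
  have inter_eq {s} (hs : r ≤ #(k ∩ s)) (hus : u ∉ s) : k ∩ s = k.erase u :=
    eq_of_subset_of_card_le (fun v hv ↦ by grind) (hcard.le.trans hs)
  have he : k ∩ e = k.erase u := inter_eq hek (by grind)
  have hf : k ∩ f = k.erase u := inter_eq hfk (by grind)
  have herase : k.erase u = e ∩ f :=
    eq_of_subset_of_card_le (fun v hv ↦ mem_inter.2 ⟨by grind, by grind⟩) (hef.trans hcard.ge)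
  exact hcon.2 (herase ▸ erase_subset u k)

theorem exists_common_subset_or_common_superset {r : ℕ} (hN : (N : Set (Finset α)).Sized (r + 1))
    (hinter : ∀ e ∈ N, ∀ f ∈ N, r ≤ #(e ∩ f)) (hcard : 1 < #N) :
    (∃ P, #P = r ∧ ∀ k ∈ N, P ⊆ k) ∨ ∃ U, #U = r + 2 ∧ ∀ k ∈ N, k ⊆ U := by
  have inter_card {e f} (he : e ∈ N) (hf : f ∈ N) (hne : e ≠ f) : #(e ∩ f) = r := by
    refine le_antisymm (Nat.lt_succ_iff.1 ?_) (hinter e he f hf)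
    rw [Nat.succ_eq_add_one, ← hN he]
    refine card_lt_card (inter_subset_left.ssubset_of_ne fun hef ↦ hne ?_)
    exact eq_of_subset_of_card_le (inter_eq_left.1 hef) ((hN hf).trans (hN he).symm).le
  have dichotomy {e f k} (he : e ∈ N) (hf : f ∈ N) (hk : k ∈ N) (hne : e ≠ f) :
      k ⊆ e ∪ f ∨ e ∩ f ⊆ k :=
    subset_union_or_inter_subset (hN hk) (inter_card he hf hne).le (hinter k hk e he)
      (hinter k hk f hf)
  obtain ⟨e, he, f, hf, hne⟩ := one_lt_card.1 hcard
  by_cases hcommon : ∀ k ∈ N, e ∩ f ⊆ k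
  · exact .inl ⟨e ∩ f, inter_card he hf hne, hcommon⟩
  push Not at hcommon
  obtain ⟨h, hh, hefh⟩ := hcommon
  have hhef : h ⊆ e ∪ f := (dichotomy he hf hh hne).resolve_right hefh
  have heh : e ≠ h := fun heh ↦ hefh (heh ▸ inter_subset_left)
  refine .inr ⟨e ∪ f, ?_, fun k hk ↦ by_contra fun hkef ↦ ?_⟩
  · have hunion := card_union_add_card_inter e f
    rw [inter_card he hf hne, hN he, hN hf] at hunion
    omega
  · have hefk : e ∩ f ⊆ k := (dichotomy he hf hk hne).resolve_left hkef
    have hehk : e ∩ h ⊆ k := (dichotomy he hh hk heh).resolve_left fun hkeh ↦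
      hkef (hkeh.trans (union_subset subset_union_left hhef))
    -- `e ∩ f` and `e ∩ h` are different `r`-subsets of `e ∩ k`, which forces `e = k`.
    have hek : e = k := by
      by_contra hek
      have hr := (inter_card he hk hek).le
      have h1 : e ∩ f = e ∩ k := eq_of_subset_of_card_le
        (subset_inter inter_subset_left hefk) (hr.trans (inter_card he hf hne).ge)
      have h2 : e ∩ h = e ∩ k := eq_of_subset_of_card_le
        (subset_inter inter_subset_left hehk) (hr.trans (inter_card he hh heh).ge)
      exact hefh (h1.trans h2.symm ▸ inter_subset_right)
    exact hkef (hek ▸ subset_union_left)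

end SetFamilies

section Splits

/-- The vertex set can be cut in two, with edges on both sides of the cut and none across it:
disconnectedness up to isolated vertices. -/
def Splits (E : Finset (Finset α)) : Prop :=
  ∃ S : Finset α, (∀ e ∈ E, e ⊆ S ∨ Disjoint e S) ∧ (∃ e ∈ E, e ⊆ S) ∧ ∃ e ∈ E, Disjoint e S

theorem exists_disjoint_bridged_of_not_splits (hE : ¬ Splits E) (hh : h ∈ E) (hl : l ∈ E)
    (hhl : Disjoint h l) :
    ∃ k ∈ E, ∃ l' ∈ E, Disjoint h l' ∧ ¬ Disjoint k h ∧ ¬ Disjoint k l' := by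
  classical
  by_contra! hcon
  have hnear {e} (he : e ∈ E) (heh : Disjoint e h) :
      Disjoint e ({k ∈ E | ¬ Disjoint k h}.biUnion id) := by
    rw [disjoint_biUnion_right]
    intro k hk
    rw [mem_filter] at hk
    exact (hcon k hk.1 e he heh.symm hk.2).symm
  have hsub {e} (he : e ∈ E) (heh : ¬ Disjoint e h) : e ⊆ {k ∈ E | ¬ Disjoint k h}.biUnion id :=
    subset_biUnion_of_mem id (mem_filter.2 ⟨he, heh⟩)
  refine hE ⟨{k ∈ E | ¬ Disjoint k h}.biUnion id, fun e he ↦ ?_, ?_, l, hl, hnear hl hhl.symm⟩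
  · by_cases heh : Disjoint e h
    · exact .inr (hnear he heh)
    · exact .inl (hsub he heh)
  · by_cases hempty : Disjoint h h
    · exact ⟨h, hh, by simp [disjoint_self_iff_empty _ |>.1 hempty]⟩
    · exact ⟨h, hh, hsub hh hempty⟩

theorem exists_inter_eq_singleton_of_not_splits [DecidableEq α]
    (hN3 : (N : Set (Finset α)).Sized 3) (hN : ¬ Splits N) (hh : h ∈ N)
    (hl : l ∈ N) (hhl : Disjoint h l)
    (htwo : ∀ k ∈ N, ¬ Disjoint k h → (k ∩ h).Nontrivial) :
    ∃ k ∈ N, ∃ l' ∈ N, ∃ z, Disjoint h l' ∧ #(k ∩ h) = 2 ∧ z ∉ h ∧ k = insert z (k ∩ h) ∧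
      k ∩ l' = {z} := by
  obtain ⟨k, hk, l', hl', hhl', hkh, hkl'⟩ := exists_disjoint_bridged_of_not_splits hN hh hl hhl
  obtain ⟨z, hzk, hzl'⟩ := not_disjoint_iff.1 hkl'
  have hzh : z ∉ h := disjoint_right.1 hhl' hzl'
  have hins : insert z (k ∩ h) = k := by
    refine eq_of_subset_of_card_le (insert_subset hzk inter_subset_left) ?_
    rw [card_insert_of_notMem (by simp [hzh]), hN3 hk]
    have := one_lt_card_iff_nontrivial.2 (htwo k hk hkh)
    omega
  refine ⟨k, hk, l', hl', z, hhl', ?_, hzh, hins.symm, ?_⟩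
  · have := hN3 hk
    rw [← hins, card_insert_of_notMem (by simp [hzh])] at this
    omega
  · rw [← hins, insert_inter_of_mem hzl', disjoint_iff_inter_eq_empty.1
      (hhl'.mono_left inter_subset_right), insert_empty_eq]

end Splits

variable [DecidableEq α]

section PCFree

/-- The vertex set `V` with edge set `E` is a `{P,C}`-free 3-graph. The last field encodes freeness:
if `f` meets `e` and `g` in single points `p ≠ q`, then the three edges form a copy of `P` or of `C`
unless `g` contains the two points of `e` other than `p`. -/
structure PCFreeOn (V : Finset α) (E : Finset (Finset α)) : Prop where
  sized : (E : Set (Finset α)).Sized 3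
  subset : ∀ e ∈ E, e ⊆ V
  erase_subset : ∀ ⦃e⦄, e ∈ E → ∀ ⦃f⦄, f ∈ E → ∀ ⦃g⦄, g ∈ E → ∀ ⦃p q⦄, p ≠ q →
    e ∩ f = {p} → f ∩ g = {q} → e.erase p ⊆ g

theorem PCFreeOn.mono (hE : PCFreeOn V E) (hF : F ⊆ E) (hW : ∀ e ∈ F, e ⊆ W) : PCFreeOn W F where
  sized := hE.sized.mono (coe_subset.2 hF)
  subset := hW
  erase_subset _ he _ hf _ hg := hE.erase_subset (hF he) (hF hf) (hF hg)

theorem not_intersecting_iff :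
    ¬ (E : Set (Finset α)).Intersecting ↔ ∃ e ∈ E, ∃ f ∈ E, Disjoint e f := by
  simp [Set.Intersecting]

theorem PCFreeOn.six_le_card (hE : PCFreeOn V E) (hM : ¬ (E : Set (Finset α)).Intersecting) :
    6 ≤ #V := by
  obtain ⟨e, he, f, hf, hef⟩ := not_intersecting_iff.1 hM
  have := card_le_card (union_subset (hE.subset e he) (hE.subset f hf))
  rwa [card_union_of_disjoint hef, hE.sized he, hE.sized hf] at this

theorem PCFreeOn.nontrivial_inter_of_mem (hE : PCFreeOn V E) (habw : {a, b, w} ∈ E) (hh : h ∈ E)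
    (hk : k ∈ E) (hah : a ∉ h) (hbh : b ∉ h) (hwh : w ∈ h) (hak : a ∉ k) (hyh : y ∈ h)
    (hyk : y ∈ k) (hyw : y ≠ w) : (h ∩ k).Nontrivial := by
  by_contra hsingle
  have hsub := hE.erase_subset habw hh hk hyw.symm (by grind)
    (inter_eq_singleton_of_not_nontrivial hyh hyk hsingle)
  exact hak (hsub (by grind))

theorem PCFreeOn.nontrivial_inter_of_notMem (hE : PCFreeOn V E) (habw : {a, b, w} ∈ E)
    (hh : h ∈ E) (hk : k ∈ E) (hah : a ∈ h) (hbh : b ∉ h) (hwh : w ∉ h) (hak : a ∉ k)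
    (hbk : b ∉ k) (hyh : y ∈ h) (hyk : y ∈ k) : (h ∩ k).Nontrivial := by
  by_contra hsingle
  have hsub := hE.erase_subset habw hh hk (p := a) (by grind) (by grind)
    (inter_eq_singleton_of_not_nontrivial hyh hyk hsingle)
  exact hbk (hsub (by grind))

theorem PCFreeOn.erase_subset_of_mem (hE : PCFreeOn V E) (habw : {a, b, w} ∈ E) (hh : h ∈ E)
    (hk : k ∈ E) (hah : a ∈ h) (hbh : b ∉ h) (hwh : w ∉ h) (hbk : b ∈ k) (hak : a ∉ k)
    (hwk : w ∉ k) : h.erase a ⊆ k :=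
  hE.erase_subset hh habw hk (q := b) (by grind) (by grind) (by grind)

end PCFree

section HookedPair

/-- Two edges on the pair `a, b`, the second through `c`, and an edge `g` avoiding `a, b, c`
that is hooked to the first one at `q`. -/
structure HookedPair (E : Finset (Finset α)) (a b q c : α) (g : Finset α) : Prop where
  ne : a ≠ b
  edge_q : {a, b, q} ∈ E
  edge_c : {a, b, c} ∈ E
  edge : g ∈ E
  left_notMem : a ∉ g
  right_notMem : b ∉ g
  mem : q ∈ g
  notMem : c ∉ g

theorem HookedPair.swap (hC : HookedPair E a b q c g) : HookedPair E b a q c g where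
  ne := hC.ne.symm
  edge_q := insert_comm a b {q} ▸ hC.edge_q
  edge_c := insert_comm a b {c} ▸ hC.edge_c
  edge := hC.edge
  left_notMem := hC.right_notMem
  right_notMem := hC.left_notMem
  mem := hC.mem
  notMem := hC.notMem

theorem exists_hookedPair_of_nontrivial_inter (hE : (E : Set (Finset α)).Sized 3) (hh : h ∈ E)
    (hk : k ∈ E) (hl : l ∈ E) (hhl : Disjoint h l) (hkh : (k ∩ h).Nontrivial) (hzk : z ∈ k)
    (hzl : z ∈ l) : ∃ a b c, HookedPair E a b z c l := by
  obtain ⟨a, ha, b, hb, hab⟩ := hkh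
  rw [mem_coe, mem_inter] at ha hb
  have hzh : z ∉ h := disjoint_right.1 hhl hzl
  obtain ⟨c, -, -, rfl⟩ := exists_eq_triple_of_mem_of_mem (hE hh) ha.2 hb.2 hab
  obtain ⟨y, -, -, rfl⟩ := exists_eq_triple_of_mem_of_mem (hE hk) ha.1 hb.1 hab
  obtain rfl : z = y := by grind
  have hnot {x} (hx : x ∈ ({a, b, c} : Finset α)) : x ∉ l := disjoint_left.1 hhl hx
  exact ⟨a, b, c, hab, hk, hh, hl, hnot (by simp), hnot (by simp), hzl, hnot (by simp)⟩

theorem PCFreeOn.exists_hookedPair (hE : PCFreeOn V E) (hsplit : ¬ Splits E)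
    (hM : ¬ (E : Set (Finset α)).Intersecting) : ∃ a b q c g, HookedPair E a b q c g := by
  obtain ⟨h, hh, l₀, hl₀, hhl₀⟩ := not_intersecting_iff.1 hM
  obtain ⟨k, hk, l, hl, hhl, hkh, hkl⟩ :=
    exists_disjoint_bridged_of_not_splits hsplit hh hl₀ hhl₀
  obtain ⟨y, hyk, hyh⟩ := not_disjoint_iff.1 hkh
  obtain ⟨z, hzk, hzl⟩ := not_disjoint_iff.1 hkl
  by_cases hkh2 : (k ∩ h).Nontrivial
  · obtain ⟨a, b, c, hC⟩ :=
      exists_hookedPair_of_nontrivial_inter hE.sized hh hk hl hhl hkh2 hzk hzl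
    exact ⟨a, b, z, c, l, hC⟩
  by_cases hkl2 : (k ∩ l).Nontrivial
  · obtain ⟨a, b, c, hC⟩ :=
      exists_hookedPair_of_nontrivial_inter hE.sized hl hk hh hhl.symm hkl2 hyk hyh
    exact ⟨a, b, y, c, h, hC⟩
  exfalso
  have hsub : h.erase y ⊆ l := hE.erase_subset hh hk hl (q := z)
    (fun hyz ↦ disjoint_left.1 hhl hyh (hyz ▸ hzl))
    (inter_comm k h ▸ inter_eq_singleton_of_not_nontrivial hyk hyh hkh2)
    (inter_eq_singleton_of_not_nontrivial hzk hzl hkl2)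
  have hempty : h.erase y = ∅ :=
    disjoint_self_iff_empty _ |>.1 (hhl.mono (Finset.erase_subset y h) hsub)
  have := hE.sized hh
  rw [← card_erase_add_one hyh, hempty, card_empty] at this
  omega

theorem HookedPair.ne_third (hC : HookedPair E a b q c g) (hE : PCFreeOn V E) : a ≠ c := by
  rintro rfl
  have := hE.sized hC.edge_c
  grind

theorem HookedPair.eq_or_subset_insert (hC : HookedPair E a b q c g) (hE : PCFreeOn V E)
    (hk : k ∈ E) (hak : a ∈ k) (hbk : b ∉ k) : k = {a, q, c} ∨ k ⊆ insert a g := by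
  have hac := hC.ne_third hE
  obtain ⟨-, hq, hc, hg, hag, hbg, hqg, hcg⟩ := hC
  have haq : a ≠ q := fun h ↦ hag (h ▸ hqg)
  by_cases hqk : q ∈ k
  · obtain ⟨w, _, _, rfl⟩ := exists_eq_triple_of_mem_of_mem (hE.sized hk) hak hqk haq
    by_cases hwg : w ∈ g
    · exact .inr (by grind)
    refine .inl (by_contra fun hwc ↦ hbg ?_)
    exact hE.erase_subset hc hk hg haq (by grind) (by grind) (by grind : b ∈ _)
  · right
    have hsub : k.erase a ⊆ g := hE.erase_subset hk hq hg haq (by grind) (by grind)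
    rw [← insert_erase hak]
    exact insert_subset_insert a hsub

/-- The third points of the edges on the pair `a, b`. -/
def pairNeighbors (V : Finset α) (E : Finset (Finset α)) (a b : α) : Finset α :=
  {w ∈ V | {a, b, w} ∈ E}

/-- The edges through `a` that avoid `b`. -/
def edgesThrough (E : Finset (Finset α)) (a b : α) : Finset (Finset α) :=
  {e ∈ E | a ∈ e ∧ b ∉ e}

/-- The edges that avoid both `a` and `b`. -/
def edgesAvoiding (E : Finset (Finset α)) (a b : α) : Finset (Finset α) :=
  {e ∈ E | a ∉ e ∧ b ∉ e}

theorem mem_edgesThrough : e ∈ edgesThrough E a b ↔ e ∈ E ∧ a ∈ e ∧ b ∉ e := mem_filter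

theorem mem_edgesAvoiding : e ∈ edgesAvoiding E a b ↔ e ∈ E ∧ a ∉ e ∧ b ∉ e := mem_filter

theorem HookedPair.edge_mem_edgesAvoiding (hC : HookedPair E a b q c g) : g ∈ edgesAvoiding E a b :=
  mem_edgesAvoiding.2 ⟨hC.edge, hC.left_notMem, hC.right_notMem⟩

theorem PCFreeOn.mem_pairNeighbors (hE : PCFreeOn V E) :
    w ∈ pairNeighbors V E a b ↔ {a, b, w} ∈ E :=
  mem_filter.trans <| and_iff_right_of_imp fun hw ↦ hE.subset _ hw (by simp)

theorem pairNeighbors_comm : pairNeighbors V E a b = pairNeighbors V E b a := by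
  simp only [pairNeighbors, insert_comm a b]

theorem edgesAvoiding_comm : edgesAvoiding E a b = edgesAvoiding E b a := by
  simp only [edgesAvoiding, and_comm]

theorem edgesAvoiding_subset : edgesAvoiding E a b ⊆ E := filter_subset _ _

theorem PCFreeOn.sdiff_pair (hE : PCFreeOn V E) :
    PCFreeOn (V \ {a, b}) (edgesAvoiding E a b) :=
  hE.mono edgesAvoiding_subset fun e he ↦ by
    rw [mem_edgesAvoiding] at he
    have := hE.subset e he.1
    grind

theorem PCFreeOn.pairNeighbors_subset (hE : PCFreeOn V E) :
    pairNeighbors V E a b ⊆ V \ {a, b} := fun w hw ↦ by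
  rw [hE.mem_pairNeighbors] at hw
  have hwV : w ∈ V := hE.subset _ hw (by simp)
  have := hE.sized hw
  grind

theorem HookedPair.card_sdiff_add_two (hC : HookedPair E a b q c g) (hE : PCFreeOn V E) :
    #(V \ {a, b}) + 2 = #V := by
  have hsub : {a, b} ⊆ V := fun x hx ↦ hE.subset _ hC.edge_q (by grind)
  rw [← card_pair hC.ne, card_sdiff_add_card_eq_card hsub]

theorem PCFreeOn.card_le_add (hE : PCFreeOn V E) (hab : a ≠ b) :
    #E ≤ #(pairNeighbors V E a b) + #(edgesThrough E a b) + #(edgesThrough E b a) +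
      #(edgesAvoiding E a b) := by
  have hcover : E ⊆ (pairNeighbors V E a b).image (fun w ↦ {a, b, w}) ∪ edgesThrough E a b ∪
      edgesThrough E b a ∪ edgesAvoiding E a b := by
    intro e he
    by_cases hab' : a ∈ e ∧ b ∈ e
    · obtain ⟨w, -, -, rfl⟩ := exists_eq_triple_of_mem_of_mem (hE.sized he) hab'.1 hab'.2 hab
      have := mem_image_of_mem (fun w ↦ ({a, b, w} : Finset α)) (hE.mem_pairNeighbors.2 he)
      grind
    · simp only [mem_union, mem_edgesThrough, mem_edgesAvoiding]
      tauto
  have := card_image_le (s := pairNeighbors V E a b) (f := fun w ↦ ({a, b, w} : Finset α))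
  have := card_le_card hcover
  grind [card_union_le]

end HookedPair

section Induction

/-- The inductive hypothesis: `condTuranNumber` bounds the number of edges of every `{P,C}`-free
3-graph containing `M` that has fewer than `n` vertices, all of them in `α`. -/
def CondTuranBelow (α : Type*) [DecidableEq α] (n : ℕ) : Prop :=
  ∀ ⦃W : Finset α⦄ ⦃F : Finset (Finset α)⦄, #W < n → PCFreeOn W F →
    ¬ (F : Set (Finset α)).Intersecting → #F ≤ condTuranNumber #W

theorem PCFreeOn.card_le_pcFreeBound {n : ℕ} (hn : CondTuranBelow α n) (hE : PCFreeOn V E)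
    (hV : #V < n) : #E ≤ pcFreeBound #V := by
  by_cases hV5 : #V ≤ 5
  · rw [pcFreeBound, if_pos hV5]
    exact card_le_choose_of_forall_subset (P := ∅) hE.sized hE.subset (empty_subset V)
      (Nat.zero_le 3) fun e _ ↦ empty_subset e
  by_cases hM : (E : Set (Finset α)).Intersecting
  · rw [pcFreeBound, if_neg hV5]
    exact card_le_choose_of_intersecting hE.sized hE.subset hM (by omega)
  · exact (hn hV hE hM).trans (condTuranNumber_le_pcFreeBound (by omega))

theorem PCFreeOn.exists_card_le_of_splits {n : ℕ} (hn : CondTuranBelow α n) (hE : PCFreeOn V E)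
    (hV : #V ≤ n) (hsplit : Splits E) :
    ∃ i j, 3 ≤ i ∧ 3 ≤ j ∧ i + j = #V ∧ #E ≤ pcFreeBound i + pcFreeBound j := by
  obtain ⟨S, hS, ⟨e, he, heS⟩, f, hf, hfS⟩ := hsplit
  have hi : 3 ≤ #(V ∩ S) := hE.sized he ▸ card_le_card (subset_inter (hE.subset e he) heS)
  have hj : 3 ≤ #(V \ S) :=
    hE.sized hf ▸ card_le_card (subset_sdiff.2 ⟨hE.subset f hf, hfS⟩)
  have hij : #(V ∩ S) + #(V \ S) = #V := card_inter_add_card_sdiff V S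
  have hin : PCFreeOn (V ∩ S) {e ∈ E | e ⊆ S} := hE.mono (filter_subset _ _) fun e he ↦
    subset_inter (hE.subset e (mem_filter.1 he).1) (mem_filter.1 he).2
  have hout : PCFreeOn (V \ S) {e ∈ E | ¬ e ⊆ S} := hE.mono (filter_subset _ _) fun e he ↦
    have ⟨he, heS⟩ := mem_filter.1 he
    subset_sdiff.2 ⟨hE.subset e he, (hS e he).resolve_left heS⟩
  refine ⟨_, _, hi, hj, hij, ?_⟩
  rw [← card_filter_add_card_filter_not (s := E) (· ⊆ S)]
  exact add_le_add (hin.card_le_pcFreeBound hn (by omega)) (hout.card_le_pcFreeBound hn (by omega))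

end Induction

section DoublyHooked

variable {S : Finset α}

/-- Two edges on the pair `a, b` that are hooked, at `q` and at `w`, to two disjoint edges `g` and
`h` avoiding `a, b`. -/
structure DoublyHooked (E : Finset (Finset α)) (a b q w : α) (g h : Finset α) : Prop where
  left : HookedPair E a b q w g
  right : HookedPair E a b w q h
  disjoint : Disjoint g h

theorem DoublyHooked.swap (hA : DoublyHooked E a b q w g h) : DoublyHooked E b a q w g h :=
  ⟨hA.left.swap, hA.right.swap, hA.disjoint⟩

theorem DoublyHooked.edgesThrough_eq_empty (hA : DoublyHooked E a b q w g h)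
    (hE : PCFreeOn V E) : edgesThrough E a b = ∅ := by
  obtain ⟨hl, hr, hgh⟩ := hA
  refine eq_empty_of_forall_notMem fun k hk ↦ ?_
  obtain ⟨hkE, hak, hbk⟩ := mem_edgesThrough.1 hk
  obtain rfl : k = {a, q, w} := by
    refine (hl.eq_or_subset_insert hE hkE hak hbk).elim id fun hkg ↦ ?_
    refine (hr.eq_or_subset_insert hE hkE hak hbk).elim (fun h ↦ h.trans (by grind)) fun hkh ↦ ?_
    have hka : k ⊆ {a} := fun x hx ↦ by
      have hxgh : ¬ (x ∈ g ∧ x ∈ h) := fun hx ↦ disjoint_left.1 hgh hx.1 hx.2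
      grind
    have := card_le_card hka
    rw [hE.sized hkE, card_singleton] at this
    omega
  have hqw : q ≠ w := fun h ↦ hl.notMem (h ▸ hl.mem)
  have hsub : g.erase q ⊆ h := hE.erase_subset hl.edge hkE hr.edge hqw
    (by grind [hl.left_notMem, hl.mem, hl.notMem])
    (by grind [hr.left_notMem, hr.mem, hr.notMem])
  have hempty : g.erase q = ∅ :=
    disjoint_self_iff_empty _ |>.1 (hgh.mono (Finset.erase_subset q g) hsub)
  have := hE.sized hl.edge
  rw [← card_erase_add_one hl.mem, hempty, card_empty] at this
  omega

theorem PCFreeOn.pairNeighbor_unique (hE : PCFreeOn V E)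
    (hsplit : ¬ Splits (edgesAvoiding E a b))
    (hM : ¬ (edgesAvoiding E a b : Set (Finset α)).Intersecting) (hh : h ∈ edgesAvoiding E a b)
    (hw : {a, b, w} ∈ E) (hz : {a, b, z} ∈ E) (hwh : w ∈ h) (hzh : z ∈ h) : w = z := by
  by_contra hwz
  obtain ⟨hhE, hah, hbh⟩ := mem_edgesAvoiding.1 hh
  have htwo : ∀ k ∈ edgesAvoiding E a b, ¬ Disjoint k h → (k ∩ h).Nontrivial := by
    intro k hk hkh
    obtain ⟨hkE, hak, -⟩ := mem_edgesAvoiding.1 hk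
    obtain ⟨y, hyk, hyh⟩ := not_disjoint_iff.1 hkh
    rw [inter_comm]
    rcases eq_or_ne y w with rfl | hyw
    · exact hE.nontrivial_inter_of_mem hz hhE hkE hah hbh hzh hak hyh hyk hwz
    · exact hE.nontrivial_inter_of_mem hw hhE hkE hah hbh hwh hak hyh hyk hyw
  have hmeet : ∀ l ∈ edgesAvoiding E a b, ¬ Disjoint l h := by
    intro l hl hlh
    obtain ⟨k, hk, l', hl', y, -, hkh, hyh, hky, hkl'⟩ :=
      exists_inter_eq_singleton_of_not_splits hE.sdiff_pair.sized hsplit hh hl hlh.symm htwo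
    obtain ⟨hkE, hak, hbk⟩ := mem_edgesAvoiding.1 hk
    obtain ⟨hlE, hal, -⟩ := mem_edgesAvoiding.1 hl'
    have hv : ∃ v, {a, b, v} ∈ E ∧ v ∈ k ∧ v ≠ y := by
      by_contra! hv
      have hwk : w ∉ k := fun hwk ↦ hyh (hv w hw hwk ▸ hwh)
      have hzk : z ∉ k := fun hzk ↦ hyh (hv z hz hzk ▸ hzh)
      have hsub : insert w (insert z (k ∩ h)) ⊆ h := by grind
      have := card_le_card hsub
      rw [card_insert_of_notMem (by grind), card_insert_of_notMem (by grind), hkh,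
        hE.sized hhE] at this
      omega
    obtain ⟨v, hv, hvk, hvy⟩ := hv
    have hykl : y ∈ k ∩ l' := by simp [hkl']
    have := hE.nontrivial_inter_of_mem hv hkE hlE hak hbk hvk hal (mem_inter.1 hykl).1
      (mem_inter.1 hykl).2 hvy.symm
    simp [hkl'] at this
  obtain ⟨e, he, f, hf, hef⟩ := not_intersecting_iff.1 hM
  have he2 := one_lt_card_iff_nontrivial.2 (htwo e he (hmeet e he))
  have hf2 := one_lt_card_iff_nontrivial.2 (htwo f hf (hmeet f hf))
  have hunion := card_le_card (union_subset (inter_subset_right (s₁ := e) (s₂ := h))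
    (inter_subset_right (s₁ := f) (s₂ := h)))
  rw [card_union_of_disjoint (hef.mono inter_subset_left inter_subset_left), hE.sized hhE] at hunion
  omega

theorem DoublyHooked.card_le (hA : DoublyHooked E a b q w g h) (hE : PCFreeOn V E)
    (hV : CondTuranBelow α #V) : #E ≤ nonCometBound #V := by
  have hg := hA.left.edge_mem_edgesAvoiding
  have hh := hA.right.edge_mem_edgesAvoiding
  have hM : ¬ (edgesAvoiding E a b : Set (Finset α)).Intersecting :=
    not_intersecting_iff.2 ⟨g, hg, h, hh, hA.disjoint⟩
  have hcard := hA.left.card_sdiff_add_two hE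
  have hsix := hE.sdiff_pair.six_le_card hM
  have hle : #E ≤ #(pairNeighbors V E a b) + #(edgesAvoiding E a b) := by
    simpa [hA.edgesThrough_eq_empty hE, hA.swap.edgesThrough_eq_empty hE] using
      hE.card_le_add hA.left.ne
  by_cases hsplit : Splits (edgesAvoiding E a b)
  · obtain ⟨i, j, hi, hj, hij, hN⟩ :=
      hE.sdiff_pair.exists_card_le_of_splits hV (by omega) hsplit
    have hD := card_le_card (hE.pairNeighbors_subset (a := a) (b := b))
    have := add_pcFreeBound_add_le_nonCometBound hi hj
    rw [show #V = i + j + 2 by omega]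
    omega
  have hN := hV (by omega) hE.sdiff_pair hM
  have hD : #(pairNeighbors V E a b) + 4 ≤ #(V \ {a, b}) := by
    have hdisj : Disjoint (pairNeighbors V E a b) (g.erase q ∪ h.erase w) := by
      refine disjoint_left.2 fun x hx hxgh ↦ ?_
      rw [hE.mem_pairNeighbors] at hx
      rw [mem_union, mem_erase, mem_erase] at hxgh
      rcases hxgh with ⟨hxq, hxg⟩ | ⟨hxw, hxh⟩
      · exact hxq (hE.pairNeighbor_unique hsplit hM hg hx hA.left.edge_q hxg hA.left.mem)
      · exact hxw (hE.pairNeighbor_unique hsplit hM hh hx hA.right.edge_q hxh hA.right.mem)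
    have hsub : g.erase q ∪ h.erase w ⊆ V \ {a, b} :=
      union_subset ((Finset.erase_subset q g).trans (hE.sdiff_pair.subset g hg))
        ((Finset.erase_subset w h).trans (hE.sdiff_pair.subset h hh))
    have := card_le_card (union_subset hE.pairNeighbors_subset hsub)
    rwa [card_union_of_disjoint hdisj, card_union_of_disjoint
      (hA.disjoint.mono (Finset.erase_subset q g) (Finset.erase_subset w h)),
      card_erase_of_mem hA.left.mem, card_erase_of_mem hA.right.mem, hE.sized hA.left.edge,
      hE.sized hA.right.edge] at this
  have := condTuranNumber_add_sub_four_le_nonCometBound hsix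
  rw [hcard] at this
  omega

theorem HookedPair.disjoint_of_mem (hC : HookedPair E a b q c g) (hE : PCFreeOn V E)
    (hgS : Disjoint g S) (haS : a ∉ S) (hbS : b ∉ S) (hDS : ∀ w, {a, b, w} ∈ E → w ∉ S)
    (he : e ∈ E) (hae : a ∈ e) : Disjoint e S := by
  by_cases hbe : b ∈ e
  · obtain ⟨w, -, -, rfl⟩ := exists_eq_triple_of_mem_of_mem (hE.sized he) hae hbe hC.ne
    simp [haS, hbS, hDS w he]
  rcases hC.eq_or_subset_insert hE he hae hbe with rfl | hsub
  · simp [haS, hDS q hC.edge_q, hDS c hC.edge_c]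
  · exact (disjoint_insert_left.2 ⟨haS, hgS⟩).mono_left hsub

theorem HookedPair.exists_mem_of_subset (hC : HookedPair E a b q c g) (hE : PCFreeOn V E)
    (hsplit : ¬ Splits E) (hS : ∀ e ∈ edgesAvoiding E a b, e ⊆ S ∨ Disjoint e S)
    (hin : ∃ e ∈ edgesAvoiding E a b, e ⊆ S) :
    ∃ f ∈ edgesAvoiding E a b, f ⊆ S ∧ ∃ w ∈ f, {a, b, w} ∈ E := by
  by_contra! hcon
  set T := {e ∈ edgesAvoiding E a b | e ⊆ S}.biUnion id with hT
  have hmemT {x} : x ∈ T ↔ ∃ f ∈ edgesAvoiding E a b, f ⊆ S ∧ x ∈ f := by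
    simp [hT, and_assoc]
  have hTS : T ⊆ S := fun x hx ↦ have ⟨_, _, hfS, hxf⟩ := hmemT.1 hx; hfS hxf
  have hDT : ∀ w, {a, b, w} ∈ E → w ∉ T := fun w hw hwT ↦
    have ⟨f, hf, hfS, hwf⟩ := hmemT.1 hwT; hcon f hf hfS w hwf hw
  have haT : a ∉ T := fun haT ↦
    have ⟨f, hf, _, haf⟩ := hmemT.1 haT; (mem_edgesAvoiding.1 hf).2.1 haf
  have hbT : b ∉ T := fun hbT ↦
    have ⟨f, hf, _, hbf⟩ := hmemT.1 hbT; (mem_edgesAvoiding.1 hf).2.2 hbf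
  have hg := hC.edge_mem_edgesAvoiding
  have hgT : Disjoint g T := ((hS g hg).resolve_left fun hgS ↦
    hcon g hg hgS q hC.mem hC.edge_q).mono_right hTS
  refine hsplit ⟨T, fun e he ↦ ?_, ?_, {a, b, q}, hC.edge_q, ?_⟩
  · by_cases hae : a ∈ e
    · exact .inr (hC.disjoint_of_mem hE hgT haT hbT hDT he hae)
    by_cases hbe : b ∈ e
    · exact .inr (hC.swap.disjoint_of_mem hE hgT hbT haT
        (fun w hw ↦ hDT w (insert_comm a b {w} ▸ hw)) he hbe)
    have heN := mem_edgesAvoiding.2 ⟨he, hae, hbe⟩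
    exact (hS e heN).imp (fun heS x hx ↦ hmemT.2 ⟨e, heN, heS, hx⟩) (·.mono_right hTS)
  · obtain ⟨e, he, heS⟩ := hin
    exact ⟨e, edgesAvoiding_subset he, fun x hx ↦ hmemT.2 ⟨e, he, heS, hx⟩⟩
  · simp [haT, hbT, hDT q hC.edge_q]

theorem HookedPair.exists_doublyHooked (hC : HookedPair E a b q c g) (hE : PCFreeOn V E)
    (hsplit : ¬ Splits E) (hN : Splits (edgesAvoiding E a b)) :
    ∃ w z f f', DoublyHooked E a b w z f f' := by
  obtain ⟨S, hS, hin, e₀, he₀, he₀S⟩ := hN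
  have hV : ∀ e ∈ edgesAvoiding E a b, e ⊆ V := fun e he ↦ hE.subset e (edgesAvoiding_subset he)
  obtain ⟨f, hf, hfS, w, hwf, hw⟩ := hC.exists_mem_of_subset hE hsplit hS hin
  obtain ⟨f', hf', hfS', z, hzf, hz⟩ := hC.exists_mem_of_subset hE hsplit (S := V \ S)
    (fun e he ↦ (hS e he).symm.imp (fun h ↦ subset_sdiff.2 ⟨hV e he, h⟩)
      (disjoint_sdiff.mono_left ·)) ⟨e₀, he₀, subset_sdiff.2 ⟨hV e₀ he₀, he₀S⟩⟩
  have hff' : Disjoint f f' := (subset_sdiff.1 hfS').2.symm.mono_left hfS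
  obtain ⟨hfE, haf, hbf⟩ := mem_edgesAvoiding.1 hf
  obtain ⟨hfE', haf', hbf'⟩ := mem_edgesAvoiding.1 hf'
  exact ⟨w, z, f, f',
    ⟨hC.ne, hw, hz, hfE, haf, hbf, hwf, disjoint_right.1 hff' hzf⟩,
    ⟨hC.ne, hz, hw, hfE', haf', hbf', hzf, disjoint_left.1 hff' hwf⟩, hff'⟩

end DoublyHooked

section NotIntersecting

theorem erase_subset_of_nontrivial_inter (he : #e = 3) (hx : x ∈ e) (hxf : x ∉ f)
    (hef : (e ∩ f).Nontrivial) : e.erase x ⊆ f := by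
  have hsub : e ∩ f ⊆ e.erase x := fun y hy ↦
    mem_erase.2 ⟨fun hyx ↦ hxf (hyx ▸ (mem_inter.1 hy).2), (mem_inter.1 hy).1⟩
  have hcard : #(e.erase x) ≤ #(e ∩ f) := by
    rw [card_erase_of_mem hx, he]
    exact one_lt_card_iff_nontrivial.2 hef
  exact eq_of_subset_of_card_le hsub hcard ▸ inter_subset_right

theorem exists_triple_mem_of_not_splits (hN3 : (N : Set (Finset α)).Sized 3) (hN : ¬ Splits N)
    (hM : ¬ (N : Set (Finset α)).Intersecting) (hg : g ∈ N) (hxg : x ∈ g) (hyg : y ∈ g)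
    (hxy : x ≠ y) (hmeet : ∀ k ∈ N, ¬ Disjoint k g → x ∈ k ∧ y ∈ k) :
    ∃ z ∉ g, {x, y, z} ∈ N ∧ ∃ l ∈ N, Disjoint g l ∧ z ∈ l := by
  have hfar : ∃ l ∈ N, Disjoint g l := by
    obtain ⟨e, he, f, hf, hef⟩ := not_intersecting_iff.1 hM
    by_cases heg : Disjoint e g
    · exact ⟨e, he, heg.symm⟩
    by_cases hfg : Disjoint f g
    · exact ⟨f, hf, hfg.symm⟩
    exact absurd (hmeet f hf hfg).1 (disjoint_left.1 hef (hmeet e he heg).1)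
  obtain ⟨l₀, hl₀, hgl₀⟩ := hfar
  obtain ⟨k, hk, l, hl, z, hgl, hkg, hzg, -, hkl⟩ :=
    exists_inter_eq_singleton_of_not_splits hN3 hN hg hl₀ hgl₀ fun k hk hkg ↦
      have ⟨hxk, hyk⟩ := hmeet k hk hkg
      ⟨x, by simp [hxk, hxg], y, by simp [hyk, hyg], hxy⟩
  have hkg' : ¬ Disjoint k g := by
    rw [disjoint_iff_inter_eq_empty, ← card_eq_zero]
    omega
  obtain ⟨hxk, hyk⟩ := hmeet k hk hkg'
  obtain ⟨-, hzl⟩ := mem_inter.1 (hkl ▸ mem_singleton_self z)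
  have hk3 : {x, y, z} = k := by
    refine eq_of_subset_of_card_le (by grind) ?_
    rw [hN3 hk, card_eq_three.2 ⟨x, y, z, hxy, by grind, by grind, rfl⟩]
  exact ⟨z, hzg, hk3 ▸ hk, l, hl, hgl, hzl⟩

theorem HookedPair.erase_subset_of_not_disjoint (hC : HookedPair E a b q c g) (hE : PCFreeOn V E)
    (hk : k ∈ E) (hak : a ∉ k) (hqk : q ∉ k) (hkg : ¬ Disjoint k g) : g.erase q ⊆ k := by
  obtain ⟨y, hyk, hyg⟩ := not_disjoint_iff.1 hkg
  exact erase_subset_of_nontrivial_inter (hE.sized hC.edge) hC.mem hqk <|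
    hE.nontrivial_inter_of_mem hC.edge_q hC.edge hk hC.left_notMem hC.right_notMem hC.mem hak hyg
      hyk fun hyq ↦ hqk (hyq ▸ hyk)

theorem HookedPair.exists_common_pair (hC : HookedPair E a b q c g) (hE : PCFreeOn V E)
    (hA : ∀ g h, ¬ DoublyHooked E a b q w g h) (hsplit : ¬ Splits (edgesAvoiding E a b))
    (hM : ¬ (edgesAvoiding E a b : Set (Finset α)).Intersecting) (hw : {a, b, w} ∈ E)
    (hh : h ∈ edgesAvoiding E a b) (hwh : w ∈ h) (hwq : w ≠ q) :
    ∃ x y, x ≠ y ∧ g = {x, y, q} ∧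
      ∀ k ∈ edgesAvoiding E a b, ¬ Disjoint k g → x ∈ k ∧ y ∈ k := by
  have hunique {k} (hk : k ∈ edgesAvoiding E a b) : w ∈ k → q ∉ k := fun hwk hqk ↦
    hwq (hE.pairNeighbor_unique hsplit hM hk hw hC.edge_q hwk hqk)
  obtain ⟨hhE, hah, hbh⟩ := mem_edgesAvoiding.1 hh
  have hC' : HookedPair E a b w q h := ⟨hC.ne, hw, hC.edge_q, hhE, hah, hbh, hwh, hunique hh hwh⟩
  have hthrough {k} (hk : k ∈ edgesAvoiding E a b) (hqk : q ∈ k) : h.erase w ⊆ k := by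
    obtain ⟨hkE, hak, hbk⟩ := mem_edgesAvoiding.1 hk
    have hwk : w ∉ k := fun hwk ↦ hunique hk hwk hqk
    exact hC'.erase_subset_of_not_disjoint hE hkE hak hwk fun hkh ↦
      hA k h ⟨⟨hC.ne, hC.edge_q, hw, hkE, hak, hbk, hqk, hwk⟩, hC', hkh⟩
  have hg := hC.edge_mem_edgesAvoiding
  obtain ⟨x, y, hwx, hwy, hxy, rfl⟩ := exists_eq_triple_of_mem (hE.sized hhE) hwh
  have hsub : {x, y} ⊆ g := by
    have := hthrough hg hC.mem
    grind
  have hqh := hC'.notMem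
  obtain ⟨z, hzx, hzy, hg_eq⟩ := exists_eq_triple_of_mem_of_mem (hE.sized hC.edge)
    (hsub (mem_insert_self x {y})) (hsub (by simp)) hxy
  obtain rfl : q = z := by grind [hC.mem]
  refine ⟨x, y, hxy, hg_eq, fun k hk hkg ↦ ?_⟩
  obtain ⟨hkE, hak, -⟩ := mem_edgesAvoiding.1 hk
  by_cases hqk : q ∈ k
  · have := hthrough hk hqk
    grind
  · have := hC.erase_subset_of_not_disjoint hE hkE hak hqk hkg
    grind

theorem HookedPair.eq_of_mem_edgesAvoiding (hC : HookedPair E a b q c g) (hE : PCFreeOn V E)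
    (hA : ∀ a b q w g h, ¬ DoublyHooked E a b q w g h) (hsplit : ¬ Splits (edgesAvoiding E a b))
    (hM : ¬ (edgesAvoiding E a b : Set (Finset α)).Intersecting) (hw : {a, b, w} ∈ E)
    (hh : h ∈ edgesAvoiding E a b) (hwh : w ∈ h) : w = q := by
  by_contra hwq
  obtain ⟨x, y, hxy, rfl, hmeet⟩ := hC.exists_common_pair hE (hA a b q w) hsplit hM hw hh hwh hwq
  have hgN := hC.edge_mem_edgesAvoiding
  obtain ⟨-, hq, -, hg, hag, hbg, -, -⟩ := hC
  obtain ⟨z, hzg, hz, l, hl, hgl, hzl⟩ := exists_triple_mem_of_not_splits hE.sdiff_pair.sized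
    hsplit hM hgN (by simp) (by simp) hxy hmeet
  obtain ⟨hzE, haz, hbz⟩ := mem_edgesAvoiding.1 hz
  obtain ⟨hlE, hal, hbl⟩ := mem_edgesAvoiding.1 hl
  simp only [disjoint_insert_left, disjoint_singleton_left] at hgl
  obtain ⟨hxl, hyl, hql⟩ := hgl
  have hq3 := hE.sized hg
  exact hA x y q z {a, b, q} l
    ⟨⟨hxy, hg, hzE, hq, by grind, by grind, by simp, by grind⟩,
      ⟨hxy, hzE, hg, hlE, hxl, hyl, hzl, hql⟩, by simp [hal, hbl, hql]⟩

theorem HookedPair.not_subset_insert (hC : HookedPair E a b q c g) (hE : PCFreeOn V E)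
    (hsplit : ¬ Splits (edgesAvoiding E a b))
    (hM : ¬ (edgesAvoiding E a b : Set (Finset α)).Intersecting) (he : e ∈ E) (hae : a ∈ e)
    (hbe : b ∉ e) (hqe : q ∈ e) : ¬ e ⊆ insert a g := by
  intro hsub
  obtain ⟨-, hq, hc, -, hag, -, hqg, hcg⟩ := id hC
  have hce : c ∉ e := fun hce ↦ (mem_insert.1 (hsub hce)).elim (hC.ne_third hE).symm hcg
  obtain ⟨r, hra, hrq, rfl⟩ := exists_eq_triple_of_mem_of_mem (hE.sized he) hae hqe
    (fun haq ↦ hag (haq ▸ hqg))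
  have hrg : r ∈ g := (mem_insert.1 (hsub (by simp))).resolve_left hra
  have hpair : ∀ k ∈ edgesAvoiding E a b, q ∈ k ∨ r ∈ k → q ∈ k ∧ r ∈ k := by
    intro k hk hqrk
    obtain ⟨hkE, hak, hbk⟩ := mem_edgesAvoiding.1 hk
    obtain ⟨t, hte, htk⟩ : ∃ t ∈ ({a, q, r} : Finset α), t ∈ k := by grind
    have := erase_subset_of_nontrivial_inter (hE.sized he) hae hak <|
      hE.nontrivial_inter_of_notMem hc he hkE hae hbe hce hak hbk hte htk
    grind
  have hmeet : ∀ k ∈ edgesAvoiding E a b, ¬ Disjoint k g → q ∈ k ∧ r ∈ k := by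
    intro k hk hkg
    obtain ⟨hkE, hak, -⟩ := mem_edgesAvoiding.1 hk
    by_cases hqk : q ∈ k
    · exact hpair k hk (.inl hqk)
    · exact hpair k hk <| .inr <|
        hC.erase_subset_of_not_disjoint hE hkE hak hqk hkg (mem_erase.2 ⟨hrq, hrg⟩)
  obtain ⟨z, -, hz, l, hl, hgl, hzl⟩ := exists_triple_mem_of_not_splits hE.sdiff_pair.sized
    hsplit hM hC.edge_mem_edgesAvoiding hqg hrg hrq.symm hmeet
  obtain ⟨hzE, haz, hbz⟩ := mem_edgesAvoiding.1 hz
  obtain ⟨hlE, hal, -⟩ := mem_edgesAvoiding.1 hl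
  have hnot {t} (ht : t ∈ g) : t ∉ l := disjoint_left.1 hgl ht
  have := hE.nontrivial_inter_of_mem hq hzE hlE haz hbz (by simp) hal (by simp) hzl
    fun hzq ↦ hnot hqg (hzq ▸ hzl)
  rw [insert_inter_of_notMem (hnot hqg), insert_inter_of_notMem (hnot hrg),
    singleton_inter_of_mem hzl] at this
  exact not_nontrivial_singleton this

theorem HookedPair.card_edgesThrough_le_two (hC : HookedPair E a b q c g) (hE : PCFreeOn V E)
    (hsplit : ¬ Splits (edgesAvoiding E a b))
    (hM : ¬ (edgesAvoiding E a b : Set (Finset α)).Intersecting) : #(edgesThrough E a b) ≤ 2 := by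
  have hsub : edgesThrough E a b ⊆ {insert a (g.erase q), {a, q, c}} := by
    intro k hk
    obtain ⟨hkE, hak, hbk⟩ := mem_edgesThrough.1 hk
    refine mem_insert.2 <| (hC.eq_or_subset_insert hE hkE hak hbk).symm.imp (fun hkg ↦ ?_)
      mem_singleton.2
    have hqk : q ∉ k := fun hqk ↦ hC.not_subset_insert hE hsplit hM hkE hak hbk hqk hkg
    refine eq_of_subset_of_card_le (by grind) ?_
    rw [hE.sized hkE, card_insert_of_notMem (by simp [hC.left_notMem]),
      card_erase_of_mem hC.mem, hE.sized hC.edge]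
  exact (card_le_card hsub).trans card_le_two

theorem HookedPair.card_le_of_not_intersecting (hC : HookedPair E a b q c g) (hE : PCFreeOn V E)
    (hV : CondTuranBelow α #V) (hA : ∀ a b q w g h, ¬ DoublyHooked E a b q w g h)
    (hsplit : ¬ Splits (edgesAvoiding E a b))
    (hM : ¬ (edgesAvoiding E a b : Set (Finset α)).Intersecting) : #E ≤ nonCometBound #V := by
  set D := pairNeighbors V E a b
  have hDV : D ⊆ V \ {a, b} := hE.pairNeighbors_subset
  have hqD : q ∈ D := hE.mem_pairNeighbors.2 hC.edge_q
  have hD : 2 ≤ #D := by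
    rw [← card_pair (fun hqc : q = c ↦ hC.notMem (hqc ▸ hC.mem))]
    exact card_le_card (insert_subset hqD (singleton_subset_iff.2
      (hE.mem_pairNeighbors.2 hC.edge_c)))
  have hN : PCFreeOn ((V \ {a, b}) \ D.erase q) (edgesAvoiding E a b) :=
    hE.sdiff_pair.mono Subset.rfl fun e he ↦ subset_sdiff.2 ⟨hE.sdiff_pair.subset e he,
      disjoint_left.2 fun w hwe hwD ↦ ne_of_mem_erase hwD <|
        hC.eq_of_mem_edgesAvoiding hE hA hsplit hM
          (hE.mem_pairNeighbors.1 (mem_of_mem_erase hwD)) he hwe⟩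
  have hcard : #((V \ {a, b}) \ D.erase q) + #D + 1 = #V := by
    have := card_sdiff_add_card_eq_card ((Finset.erase_subset q D).trans hDV)
    have := hC.card_sdiff_add_two hE
    have := card_erase_add_one hqD
    omega
  have hle : #E ≤ #D + _ + _ + _ := hE.card_le_add hC.ne
  have hNle := hV (by omega) hN hM
  have hA₁ := hC.card_edgesThrough_le_two hE hsplit hM
  have hA₂ := hC.swap.card_edgesThrough_le_two hE (edgesAvoiding_comm (E := E) ▸ hsplit)
    (edgesAvoiding_comm (E := E) ▸ hM)
  have := condTuranNumber_add_le_nonCometBound (hN.six_le_card hM) hD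
  rw [hcard] at this
  omega

end NotIntersecting

section Intersecting

theorem HookedPair.four_le_card_sdiff (hC : HookedPair E a b q c g) (hE : PCFreeOn V E) :
    4 ≤ #(V \ {a, b}) := by
  have hM : ¬ (E : Set (Finset α)).Intersecting :=
    not_intersecting_iff.2 ⟨_, hC.edge_c, g, hC.edge,
      by simp [hC.left_notMem, hC.right_notMem, hC.notMem]⟩
  have := hE.six_le_card hM
  have := hC.card_sdiff_add_two hE
  omega

theorem HookedPair.erase_subset_of_intersecting (hC : HookedPair E a b q c g)
    (hE : PCFreeOn V E) (hI : (edgesAvoiding E a b : Set (Finset α)).Intersecting)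
    (he : e ∈ edgesAvoiding E a b) (hf : f ∈ edgesAvoiding E a b) (hqe : q ∈ e) (hqf : q ∉ f) :
    e.erase q ⊆ f := by
  obtain ⟨heE, hae, hbe⟩ := mem_edgesAvoiding.1 he
  obtain ⟨hfE, haf, -⟩ := mem_edgesAvoiding.1 hf
  obtain ⟨y, hye, hyf⟩ := not_disjoint_iff.1 (hI he hf)
  exact erase_subset_of_nontrivial_inter (hE.sized heE) hqe hqf <|
    hE.nontrivial_inter_of_mem hC.edge_q heE hfE hae hbe hqe haf hye hyf fun hyq ↦ hqf (hyq ▸ hyf)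

theorem HookedPair.two_intersecting_or_forall_mem (hC : HookedPair E a b q c g)
    (hE : PCFreeOn V E) (hI : (edgesAvoiding E a b : Set (Finset α)).Intersecting) :
    (∀ e ∈ edgesAvoiding E a b, ∀ f ∈ edgesAvoiding E a b, (e ∩ f).Nontrivial) ∨
      (∀ k ∈ edgesAvoiding E a b, q ∈ k) ∧
        ∃ e ∈ edgesAvoiding E a b, ∃ f ∈ edgesAvoiding E a b, e ∩ f = {q} := by
  by_cases hall : ∀ k ∈ edgesAvoiding E a b, q ∈ k
  · refine or_iff_not_imp_left.2 fun htwo ↦ ⟨hall, by_contra fun hsingle ↦ htwo ?_⟩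
    exact fun e he f hf ↦ by_contra fun hef ↦ hsingle
      ⟨e, he, f, hf, inter_eq_singleton_of_not_nontrivial (hall e he) (hall f hf) hef⟩
  left
  push Not at hall
  obtain ⟨k, hk, hqk⟩ := hall
  have hg := hC.edge_mem_edgesAvoiding
  have hcard {e} (he : e ∈ edgesAvoiding E a b) (hqe : q ∈ e) : #(e.erase q) = 2 := by
    rw [card_erase_of_mem hqe, hE.sized (edgesAvoiding_subset he)]
  have hsub {e f} (he : e ∈ edgesAvoiding E a b) (hf : f ∈ edgesAvoiding E a b) (hqe : q ∈ e)
      (hqf : q ∉ f) : e.erase q ⊆ f := hC.erase_subset_of_intersecting hE hI he hf hqe hqf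
  have hof {e f P : Finset α} (hP : #P = 2) (hPe : P ⊆ e) (hPf : P ⊆ f) : (e ∩ f).Nontrivial :=
    one_lt_card_iff_nontrivial.1 (hP.ge.trans (card_le_card (subset_inter hPe hPf)))
  intro e he f hf
  by_cases hqe : q ∈ e <;> by_cases hqf : q ∈ f
  · obtain ⟨x, hx⟩ := inter_nonempty_of_card_lt_card_add_card (hsub he hk hqe hqk)
      (hsub hf hk hqf hqk)
      (by rw [hE.sized (edgesAvoiding_subset hk), hcard he hqe, hcard hf hqf]; omega)
    rw [mem_inter, mem_erase, mem_erase] at hx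
    exact ⟨x, by simp [hx], q, by simp [hqe, hqf], hx.1.1⟩
  · exact hof (hcard he hqe) (Finset.erase_subset q e) (hsub he hf hqe hqf)
  · exact hof (hcard hf hqf) (hsub hf he hqf hqe) (Finset.erase_subset q f)
  · exact hof (hcard hg hC.mem) (hsub hg he hC.mem hqe) (hsub hg hf hC.mem hqf)

/-- The edges through `a` avoiding `b` whose other two points lie in `g`. -/
def edgesInto (E : Finset (Finset α)) (a b : α) (g : Finset α) : Finset (Finset α) :=
  {e ∈ edgesThrough E a b | e ⊆ insert a g}

theorem mem_edgesInto : e ∈ edgesInto E a b g ↔ (e ∈ E ∧ a ∈ e ∧ b ∉ e) ∧ e ⊆ insert a g := by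
  rw [edgesInto, mem_filter, mem_edgesThrough]

theorem HookedPair.card_edgesThrough_le (hC : HookedPair E a b q c g) (hE : PCFreeOn V E) :
    #(edgesThrough E a b) ≤ #(edgesInto E a b g) + #({{a, q, c}} ∩ E) := by
  refine (card_le_card fun k hk ↦ ?_).trans (card_union_le _ _)
  obtain ⟨hkE, hak, hbk⟩ := mem_edgesThrough.1 hk
  rw [mem_union, mem_inter, mem_singleton]
  exact (hC.eq_or_subset_insert hE hkE hak hbk).symm.imp
    (fun hkg ↦ mem_edgesInto.2 ⟨⟨hkE, hak, hbk⟩, hkg⟩) (⟨·, hkE⟩)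

theorem HookedPair.third_notMem (hC : HookedPair E a b q c g) (hE : PCFreeOn V E)
    (hk : k ∈ edgesInto E a b g) : c ∉ k := fun hck ↦
  (mem_insert.1 ((mem_edgesInto.1 hk).2 hck)).elim (hC.ne_third hE).symm hC.notMem

theorem card_edgesInto_le_three (hE : (E : Set (Finset α)).Sized 3) (hg : #g = 3) :
    #(edgesInto E a b g) ≤ 3 := by
  have hsub : edgesInto E a b g ⊆ (g.powersetCard 2).image (insert a) := fun k hk ↦ by
    obtain ⟨⟨hkE, hak, -⟩, hkg⟩ := mem_edgesInto.1 hk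
    refine mem_image.2 ⟨k.erase a, mem_powersetCard.2 ⟨subset_insert_iff.1 hkg, ?_⟩,
      insert_erase hak⟩
    rw [card_erase_of_mem hak, hE hkE]
  calc #(edgesInto E a b g) ≤ #(g.powersetCard 2) := (card_le_card hsub).trans card_image_le
    _ = 3 := by rw [card_powersetCard, hg]; rfl

theorem card_edgesInto_le_one (hE : (E : Set (Finset α)).Sized 3) (hP : #P ≤ 2)
    (hsub : ∀ k ∈ edgesInto E a b g, k.erase a ⊆ P) : #(edgesInto E a b g) ≤ 1 := by
  have huniq : ∀ k ∈ edgesInto E a b g, k = insert a P := fun k hk ↦ by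
    obtain ⟨⟨hkE, hak, -⟩, -⟩ := mem_edgesInto.1 hk
    rw [← eq_of_subset_of_card_le (hsub k hk)
      (by rwa [card_erase_of_mem hak, hE hkE]), insert_erase hak]
  exact card_le_one.2 fun k hk l hl ↦ (huniq k hk).trans (huniq l hl).symm

theorem HookedPair.card_edgesInto_le_one_of_mem (hC : HookedPair E a b q c g)
    (hE : PCFreeOn V E) (hl : l ∈ edgesInto E b a g) : #(edgesInto E a b g) ≤ 1 := by
  obtain ⟨⟨hlE, hbl, hal⟩, -⟩ := mem_edgesInto.1 hl
  refine card_edgesInto_le_one hE.sized (P := l.erase b)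
    (by rw [card_erase_of_mem hbl, hE.sized hlE]) fun k hk ↦ ?_
  obtain ⟨⟨hkE, hak, hbk⟩, -⟩ := mem_edgesInto.1 hk
  have := hE.erase_subset_of_mem hC.edge_c hkE hlE hak hbk (hC.third_notMem hE hk) hbl hal
    (hC.swap.third_notMem hE hl)
  exact fun x hx ↦ mem_erase.2 ⟨fun hxb ↦ hbk (hxb ▸ mem_of_mem_erase hx), this hx⟩

theorem HookedPair.card_edgesInto_add_le_three (hC : HookedPair E a b q c g)
    (hE : PCFreeOn V E) : #(edgesInto E a b g) + #(edgesInto E b a g) ≤ 3 := by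
  have ha : #(edgesInto E a b g) ≤ 3 := card_edgesInto_le_three hE.sized (hE.sized hC.edge)
  have hb : #(edgesInto E b a g) ≤ 3 := card_edgesInto_le_three hE.sized (hE.sized hC.edge)
  rcases (edgesInto E a b g).eq_empty_or_nonempty with h₀ | ⟨k, hk⟩
  · rwa [h₀, card_empty, zero_add]
  rcases (edgesInto E b a g).eq_empty_or_nonempty with h₀ | ⟨l, hl⟩
  · rwa [h₀, card_empty]
  have := hC.card_edgesInto_le_one_of_mem hE hl
  have := hC.swap.card_edgesInto_le_one_of_mem hE hk
  omega

theorem HookedPair.pairNeighbors_eq_of_mem (hC : HookedPair E a b q c g) (hE : PCFreeOn V E)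
    (haqc : {a, q, c} ∈ E) : pairNeighbors V E a b = {q, c} := by
  ext w
  rw [hE.mem_pairNeighbors, mem_insert, mem_singleton]
  refine ⟨fun hw ↦ by_contra fun hwqc ↦ ?_, ?_⟩
  · obtain ⟨hab, hq, hc, hg, hag, hbg, hqg, hcg⟩ := hC
    have hw3 := hE.sized hw
    have hq3 := hE.sized hq
    have hc3 := hE.sized hc
    have := hE.nontrivial_inter_of_notMem hw haqc hg (by simp) (by grind) (by grind) hag hbg
      (by simp : q ∈ _) hqg
    rw [insert_inter_of_notMem hag, insert_inter_of_mem hqg, singleton_inter_of_notMem hcg] at this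
    exact not_nontrivial_singleton this
  · rintro (rfl | rfl)
    exacts [hC.edge_q, hC.edge_c]

theorem HookedPair.card_pairNeighbors_add_le (hC : HookedPair E a b q c g) (hE : PCFreeOn V E) :
    #(pairNeighbors V E a b) + #({{a, q, c}} ∩ E) + #({{b, q, c}} ∩ E) ≤ #(V \ {a, b}) := by
  have hV := hC.four_le_card_sdiff hE
  have hone {e : Finset α} : #({e} ∩ E) ≤ 1 := (card_le_card inter_subset_left).trans_eq
    (card_singleton e)
  by_cases haqc : {a, q, c} ∈ E
  · have := hC.pairNeighbors_eq_of_mem hE haqc ▸ card_le_two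
    have := hone (e := {a, q, c})
    have := hone (e := {b, q, c})
    omega
  by_cases hbqc : {b, q, c} ∈ E
  · have := pairNeighbors_comm (V := V) ▸ hC.swap.pairNeighbors_eq_of_mem hE hbqc ▸ card_le_two
    have := hone (e := {a, q, c})
    have := hone (e := {b, q, c})
    omega
  simpa [haqc, hbqc] using card_le_card hE.pairNeighbors_subset

theorem HookedPair.erase_subset_of_mem_edgesInto (hC : HookedPair E a b q c g)
    (hE : PCFreeOn V E)
    (hI : ∀ e ∈ edgesAvoiding E a b, ∀ f ∈ edgesAvoiding E a b, (e ∩ f).Nontrivial)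
    (hk : k ∈ edgesInto E a b g) (hf : f ∈ edgesAvoiding E a b) : k.erase a ⊆ f := by
  obtain ⟨⟨hkE, hak, hbk⟩, hkg⟩ := mem_edgesInto.1 hk
  obtain ⟨hfE, haf, hbf⟩ := mem_edgesAvoiding.1 hf
  have hgf := one_lt_card_iff_nontrivial.2 (hI g hC.edge_mem_edgesAvoiding f hf)
  obtain ⟨t, ht⟩ := inter_nonempty_of_card_lt_card_add_card (subset_insert_iff.1 hkg)
    (inter_subset_left (s₂ := f))
    (by rw [hE.sized hC.edge, card_erase_of_mem hak, hE.sized hkE]; omega)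
  rw [mem_inter, mem_inter] at ht
  exact erase_subset_of_nontrivial_inter (hE.sized hkE) hak haf <|
    hE.nontrivial_inter_of_notMem hC.edge_c hkE hfE hak hbk (hC.third_notMem hE hk) haf hbf
      (mem_of_mem_erase ht.1) ht.2.2

theorem HookedPair.card_edgesInto_le_one_of_ne (hC : HookedPair E a b q c g)
    (hE : PCFreeOn V E)
    (hI : ∀ e ∈ edgesAvoiding E a b, ∀ f ∈ edgesAvoiding E a b, (e ∩ f).Nontrivial)
    (hf : f ∈ edgesAvoiding E a b) (hfg : f ≠ g) : #(edgesInto E a b g) ≤ 1 := by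
  refine card_edgesInto_le_one hE.sized (P := g ∩ f) ?_ fun k hk ↦ subset_inter
    (hC.erase_subset_of_mem_edgesInto hE hI hk hC.edge_mem_edgesAvoiding)
    (hC.erase_subset_of_mem_edgesInto hE hI hk hf)
  refine Nat.le_of_lt_succ ((hE.sized hC.edge).symm ▸ card_lt_card ?_ : #(g ∩ f) < 3)
  refine inter_subset_left.ssubset_of_ne fun hgf ↦ hfg ?_
  exact (eq_of_subset_of_card_le (inter_eq_left.1 hgf)
    ((hE.sized (edgesAvoiding_subset hf)).trans (hE.sized hC.edge).symm).le).symm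

theorem HookedPair.exists_common_subset_of_mem_edgesInto (hC : HookedPair E a b q c g)
    (hE : PCFreeOn V E)
    (hI : ∀ e ∈ edgesAvoiding E a b, ∀ f ∈ edgesAvoiding E a b, (e ∩ f).Nontrivial)
    (hk : k ∈ edgesInto E a b g) : ∃ P, #P = 2 ∧ ∀ e ∈ edgesAvoiding E a b, P ⊆ e := by
  obtain ⟨⟨hkE, hak, -⟩, -⟩ := mem_edgesInto.1 hk
  exact ⟨k.erase a, by rw [card_erase_of_mem hak, hE.sized hkE],
    fun e he ↦ hC.erase_subset_of_mem_edgesInto hE hI hk he⟩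

theorem HookedPair.card_edgesInto_add_card_edgesAvoiding_le (hC : HookedPair E a b q c g)
    (hE : PCFreeOn V E)
    (hI : ∀ e ∈ edgesAvoiding E a b, ∀ f ∈ edgesAvoiding E a b, (e ∩ f).Nontrivial) :
    #(edgesInto E a b g) + #(edgesInto E b a g) + #(edgesAvoiding E a b) ≤ #(V \ {a, b}) := by
  have hV := hC.four_le_card_sdiff hE
  have hN := hE.sdiff_pair (a := a) (b := b)
  by_cases hone : #(edgesAvoiding E a b) ≤ 1
  · have := hC.card_edgesInto_add_le_three hE
    omega
  push Not at hone
  obtain ⟨f, hf, hfg⟩ := exists_mem_ne hone g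
  have hI' := edgesAvoiding_comm (E := E) ▸ hI
  have ha := hC.card_edgesInto_le_one_of_ne hE hI hf hfg
  have hb := hC.swap.card_edgesInto_le_one_of_ne hE hI' (edgesAvoiding_comm (E := E) ▸ hf) hfg
  by_cases hP : ∃ P, #P = 2 ∧ ∀ e ∈ edgesAvoiding E a b, P ⊆ e
  · obtain ⟨P, hP, hPe⟩ := hP
    have := card_le_choose_of_forall_subset hN.sized hN.subset
      ((hPe f hf).trans (hN.subset f hf)) (hP.trans_le (by simp)) hPe
    rw [hP, Nat.choose_one_right] at this
    omega
  have ha₀ : edgesInto E a b g = ∅ := eq_empty_of_forall_notMem fun k hk ↦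
    hP (hC.exists_common_subset_of_mem_edgesInto hE hI hk)
  have hb₀ : edgesInto E b a g = ∅ := eq_empty_of_forall_notMem fun k hk ↦
    hP (edgesAvoiding_comm (E := E) ▸ hC.swap.exists_common_subset_of_mem_edgesInto hE hI' hk)
  obtain ⟨U, hU, hNU⟩ := (exists_common_subset_or_common_superset (r := 2) hN.sized
    (fun e he f hf ↦ one_lt_card_iff_nontrivial.2 (hI e he f hf)) hone).resolve_left hP
  have : #(edgesAvoiding E a b) ≤ (#U - 0).choose (3 - 0) := card_le_choose_of_forall_subset
    hN.sized hNU (empty_subset U) (Nat.zero_le 3) fun e _ ↦ empty_subset e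
  rw [hU, show Nat.choose (2 + 2 - 0) (3 - 0) = 4 from rfl] at this
  rw [ha₀, hb₀, card_empty]
  omega

theorem HookedPair.card_le_of_two_intersecting (hC : HookedPair E a b q c g)
    (hE : PCFreeOn V E)
    (hI : ∀ e ∈ edgesAvoiding E a b, ∀ f ∈ edgesAvoiding E a b, (e ∩ f).Nontrivial) :
    #E ≤ 2 * #V - 4 := by
  have := hE.card_le_add hC.ne
  have := hC.card_edgesThrough_le hE
  have := hC.swap.card_edgesThrough_le hE
  have := hC.card_pairNeighbors_add_le hE
  have := hC.card_edgesInto_add_card_edgesAvoiding_le hE hI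
  have := hC.card_sdiff_add_two hE
  omega

end Intersecting

section Comet

/-- The edges of the comet on `V` whose complete part lives on `K` and whose star has center `q`;
it is meant for `q ∈ K ⊆ V` and `#K = 4`. -/
def cometOn (V K : Finset α) (q : α) : Finset (Finset α) :=
  K.powersetCard 3 ∪ {e ∈ (insert q (V \ K)).powersetCard 3 | q ∈ e}

/-- The vertex set `V` with edge set `E` is a comet. -/
def IsComet (V : Finset α) (E : Finset (Finset α)) : Prop :=
  ∃ K q, q ∈ K ∧ K ⊆ V ∧ #K = 4 ∧ E = cometOn V K q

variable {K : Finset α}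

theorem mem_cometOn :
    e ∈ cometOn V K q ↔ #e = 3 ∧ (e ⊆ K ∨ q ∈ e ∧ e ⊆ insert q (V \ K)) := by
  rw [cometOn, mem_union, mem_filter, mem_powersetCard, mem_powersetCard]
  tauto

theorem card_cometOn (hq : q ∈ K) (hKV : K ⊆ V) (hK : #K = 4) :
    #(cometOn V K q) = 4 + (#V - 4).choose 2 := by
  have hqV : q ∉ V \ K := fun h ↦ (mem_sdiff.1 h).2 hq
  have hdisj : Disjoint (K.powersetCard 3) {e ∈ (insert q (V \ K)).powersetCard 3 | q ∈ e} := by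
    refine disjoint_left.2 fun e heK he ↦ ?_
    simp only [mem_filter, mem_powersetCard] at heK he
    have hsub : e ⊆ {q} := fun x hx ↦ mem_singleton.2 <|
      (mem_insert.1 (he.1.1 hx)).resolve_right fun hxVK ↦ (mem_sdiff.1 hxVK).2 (heK.1 hx)
    have := card_le_card hsub
    rw [heK.2, card_singleton] at this
    omega
  have hstar := card_filter_powersetCard_subset {q} (insert q (V \ K)) 3 (by simp) (by simp)
  simp only [singleton_subset_iff, card_insert_of_notMem hqV, card_sdiff_of_subset hKV, hK,
    card_singleton, Nat.add_sub_cancel] at hstar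
  rw [cometOn, card_union_of_disjoint hdisj, card_powersetCard, hK, hstar]
  rfl

theorem IsComet.card_eq (hE : IsComet V E) : #E = 4 + (#V - 4).choose 2 := by
  obtain ⟨K, q, hq, hKV, hK, rfl⟩ := hE
  exact card_cometOn hq hKV hK

end Comet

section Link

theorem PCFreeOn.eq_of_mem_of_inter_eq_singleton (hE : PCFreeOn V E)
    (hall : ∀ k ∈ edgesAvoiding E a b, q ∈ k) (he : e ∈ edgesAvoiding E a b)
    (hf : f ∈ edgesAvoiding E a b) (hef : e ∩ f = {q}) (hw : {a, b, w} ∈ E)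
    (hh : h ∈ edgesAvoiding E a b) (hwh : w ∈ h) : w = q := by
  by_contra hwq
  have htwo {k l} (hk : k ∈ edgesAvoiding E a b) (hl : l ∈ edgesAvoiding E a b) (hwk : w ∈ k) :
      (k ∩ l).Nontrivial := by
    obtain ⟨hkE, hak, hbk⟩ := mem_edgesAvoiding.1 hk
    obtain ⟨hlE, hal, -⟩ := mem_edgesAvoiding.1 hl
    exact hE.nontrivial_inter_of_mem hw hkE hlE hak hbk hwk hal (hall k hk) (hall l hl)
      (Ne.symm hwq)
  have hnot : ¬ (e ∩ f).Nontrivial := hef ▸ not_nontrivial_singleton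
  have hwe : w ∉ e := fun hwe ↦ hnot (htwo he hf hwe)
  have hwf : w ∉ f := fun hwf ↦ hnot (inter_comm e f ▸ htwo hf he hwf)
  have hh3 := hE.sized (edgesAvoiding_subset hh)
  have hsub : h.erase w ⊆ {q} := hef ▸ subset_inter
    (erase_subset_of_nontrivial_inter hh3 hwh hwe (htwo hh he hwh))
    (erase_subset_of_nontrivial_inter hh3 hwh hwf (htwo hh hf hwh))
  have := card_le_card hsub
  rw [card_erase_of_mem hwh, hh3, card_singleton] at this
  omega

theorem HookedPair.edgesThrough_subset_singleton (hC : HookedPair E a b q c e)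
    (hC' : HookedPair E a b q c f) (hE : PCFreeOn V E) (hef : e ∩ f = {q}) :
    edgesThrough E a b ⊆ {{a, q, c}} := by
  intro k hk
  obtain ⟨hkE, hak, hbk⟩ := mem_edgesThrough.1 hk
  rw [mem_singleton]
  by_contra hne
  have hke := (hC.eq_or_subset_insert hE hkE hak hbk).resolve_left hne
  have hkf := (hC'.eq_or_subset_insert hE hkE hak hbk).resolve_left hne
  have hsub : k ⊆ {a, q} := by
    rw [← hef, insert_inter_distrib]
    exact subset_inter hke hkf
  have := (card_le_card hsub).trans card_le_two
  rw [hE.sized hkE] at this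
  omega

theorem HookedPair.subset_cometOn (hC : HookedPair E a b q c e) (hC' : HookedPair E a b q c f)
    (hE : PCFreeOn V E) (hall : ∀ k ∈ edgesAvoiding E a b, q ∈ k) (hef : e ∩ f = {q})
    (hc : ∀ k ∈ edgesAvoiding E a b, c ∉ k) (hD : pairNeighbors V E a b = {q, c}) :
    E ⊆ cometOn V {a, b, q, c} q := by
  intro k hk
  refine mem_cometOn.2 ⟨hE.sized hk, ?_⟩
  by_cases hak : a ∈ k <;> by_cases hbk : b ∈ k
  · obtain ⟨w, -, -, rfl⟩ := exists_eq_triple_of_mem_of_mem (hE.sized hk) hak hbk hC.ne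
    rw [← hE.mem_pairNeighbors, hD] at hk
    exact .inl (by grind)
  · have := hC.edgesThrough_subset_singleton hC' hE hef (mem_edgesThrough.2 ⟨hk, hak, hbk⟩)
    exact .inl (by grind)
  · have := hC.swap.edgesThrough_subset_singleton hC'.swap hE hef
      (mem_edgesThrough.2 ⟨hk, hbk, hak⟩)
    exact .inl (by grind)
  · have hkN := mem_edgesAvoiding.2 ⟨hk, hak, hbk⟩
    have hck := hc k hkN
    have hkV := hE.subset k hk
    exact .inr ⟨hall k hkN, by grind⟩

theorem HookedPair.card_pairNeighbors_le_and_card_edgesAvoiding_le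
    (hC : HookedPair E a b q c g) (hE : PCFreeOn V E) (hall : ∀ k ∈ edgesAvoiding E a b, q ∈ k)
    (he : e ∈ edgesAvoiding E a b) (hf : f ∈ edgesAvoiding E a b) (hef : e ∩ f = {q}) :
    #(pairNeighbors V E a b) + 4 ≤ #(V \ {a, b}) ∧
      #(edgesAvoiding E a b) ≤ (#(V \ {a, b}) - #(pairNeighbors V E a b)).choose 2 := by
  set X := (V \ {a, b}) \ pairNeighbors V E a b
  have hX : #X = #(V \ {a, b}) - #(pairNeighbors V E a b) :=
    card_sdiff_of_subset hE.pairNeighbors_subset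
  have hqX : q ∉ X := by simp [X, hE.mem_pairNeighbors, hC.edge_q]
  have hNX : ∀ k ∈ edgesAvoiding E a b, k.erase q ⊆ X := fun k hk x hx ↦ by
    obtain ⟨hxq, hxk⟩ := mem_erase.1 hx
    refine mem_sdiff.2 ⟨hE.sdiff_pair.subset k hk hxk, fun hxD ↦ hxq ?_⟩
    exact hE.eq_of_mem_of_inter_eq_singleton hall he hf hef (hE.mem_pairNeighbors.1 hxD) hk hxk
  have hfour : 4 ≤ #X := by
    have hdisj : Disjoint (e.erase q) (f.erase q) := by
      refine disjoint_left.2 fun x hxe hxf ↦ (mem_erase.1 hxe).1 (mem_singleton.1 ?_)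
      exact hef ▸ mem_inter.2 ⟨mem_of_mem_erase hxe, mem_of_mem_erase hxf⟩
    have := card_le_card (union_subset (hNX e he) (hNX f hf))
    rwa [card_union_of_disjoint hdisj, card_erase_of_mem (hall e he),
      card_erase_of_mem (hall f hf), hE.sdiff_pair.sized he, hE.sdiff_pair.sized hf] at this
  refine ⟨by omega, ?_⟩
  have := card_le_choose_of_forall_subset hE.sdiff_pair.sized
    (fun k hk ↦ subset_insert_iff.2 (hNX k hk)) (singleton_subset_iff.2 (mem_insert_self q X))
    (by simp) fun k hk ↦ singleton_subset_iff.2 (hall k hk)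
  rwa [card_insert_of_notMem hqX, card_singleton, Nat.add_sub_cancel, hX] at this

theorem HookedPair.edgesThrough_eq_empty (hC : HookedPair E a b q c e)
    (hC' : HookedPair E a b q c f) (hE : PCFreeOn V E) (hef : e ∩ f = {q})
    (hD : pairNeighbors V E a b ≠ {q, c}) : edgesThrough E a b = ∅ := by
  refine eq_empty_of_forall_notMem fun k hk ↦ hD (hC.pairNeighbors_eq_of_mem hE ?_)
  rw [← mem_singleton.1 (hC.edgesThrough_subset_singleton hC' hE hef hk)]
  exact (mem_edgesThrough.1 hk).1

theorem HookedPair.isComet_or_card_lt (hC : HookedPair E a b q c g) (hE : PCFreeOn V E)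
    (hE' : E ⊆ cometOn V {a, b, q, c} q) : IsComet V E ∨ #E < 4 + (#V - 4).choose 2 := by
  set K : Finset α := {a, b, q, c} with hK
  obtain ⟨haq, hbq⟩ : a ≠ q ∧ b ≠ q :=
    ⟨fun h ↦ hC.left_notMem (h ▸ hC.mem), fun h ↦ hC.right_notMem (h ▸ hC.mem)⟩
  have hqc : q ≠ c := fun hqc ↦ hC.notMem (hqc ▸ hC.mem)
  have hK4 : #K = 4 := by
    rw [hK, card_insert_of_notMem (by simp [hC.ne, haq, hC.ne_third hE]),
      card_insert_of_notMem (by simp [hbq, hC.swap.ne_third hE]), card_pair hqc]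
  have hKV : K ⊆ V := by
    have := hE.subset _ hC.edge_q
    have := hE.subset _ hC.edge_c
    grind
  have hqK : q ∈ K := by simp [hK]
  refine or_iff_not_imp_left.2 fun hcomet ↦ card_cometOn hqK hKV hK4 ▸ card_lt_card ?_
  exact hE'.ssubset_of_ne fun h ↦ hcomet ⟨K, q, hqK, hKV, hK4, h⟩

theorem HookedPair.isComet_or_card_le_of_inter_eq_singleton (hC : HookedPair E a b q c g)
    (hE : PCFreeOn V E) (hall : ∀ k ∈ edgesAvoiding E a b, q ∈ k) (he : e ∈ edgesAvoiding E a b)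
    (hf : f ∈ edgesAvoiding E a b) (hef : e ∩ f = {q}) :
    IsComet V E ∨ #E ≤ 3 + (#V - 4).choose 2 := by
  have hqc : q ≠ c := fun hqc ↦ hC.notMem (hqc ▸ hC.mem)
  have hc : ∀ k ∈ edgesAvoiding E a b, c ∉ k := fun k hk hck ↦
    hqc (hE.eq_of_mem_of_inter_eq_singleton hall he hf hef hC.edge_c hk hck).symm
  have hooked {k} (hk : k ∈ edgesAvoiding E a b) : HookedPair E a b q c k :=
    have ⟨hkE, hak, hbk⟩ := mem_edgesAvoiding.1 hk
    ⟨hC.ne, hC.edge_q, hC.edge_c, hkE, hak, hbk, hall k hk, hc k hk⟩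
  by_cases hD : pairNeighbors V E a b = {q, c}
  · have := hC.isComet_or_card_lt hE ((hooked he).subset_cometOn (hooked hf) hE hall hef hc hD)
    exact this.imp_right fun _ ↦ by omega
  right
  have hEle : #E ≤ #(pairNeighbors V E a b) + #(edgesAvoiding E a b) := by
    simpa [(hooked he).edgesThrough_eq_empty (hooked hf) hE hef hD,
      (hooked he).swap.edgesThrough_eq_empty (hooked hf).swap hE hef
        (pairNeighbors_comm (V := V) ▸ hD)] using hE.card_le_add hC.ne
  obtain ⟨hfour, hN⟩ := hC.card_pairNeighbors_le_and_card_edgesAvoiding_le hE hall he hf hef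
  have hD2 : 2 ≤ #(pairNeighbors V E a b) := by
    rw [← card_pair hqc]
    exact card_le_card <| insert_subset (hE.mem_pairNeighbors.2 hC.edge_q) <|
      singleton_subset_iff.2 (hE.mem_pairNeighbors.2 hC.edge_c)
  have hnum := add_choose_two_le hD2
    (m := #(V \ {a, b}) - #(pairNeighbors V E a b)) (by omega)
  rw [show #(V \ {a, b}) - #(pairNeighbors V E a b) + #(pairNeighbors V E a b) - 2 = #V - 4 by
    have := hC.card_sdiff_add_two hE; omega] at hnum
  omega

end Link

section Main

theorem HookedPair.isComet_or_card_le_of_intersecting (hC : HookedPair E a b q c g)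
    (hE : PCFreeOn V E) (hI : (edgesAvoiding E a b : Set (Finset α)).Intersecting) :
    IsComet V E ∨ #E ≤ nonCometBound #V := by
  have hV : 6 ≤ #V := by
    have := hC.card_sdiff_add_two hE
    have := hC.four_le_card_sdiff hE
    omega
  rcases hC.two_intersecting_or_forall_mem hE hI with htwo | ⟨hall, e, he, f, hf, hef⟩
  · exact .inr ((hC.card_le_of_two_intersecting hE htwo).trans
      (two_mul_sub_four_le_nonCometBound hV))
  · exact (hC.isComet_or_card_le_of_inter_eq_singleton hE hall he hf hef).imp_right
      (·.trans (three_add_choose_two_le_nonCometBound hV))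

theorem PCFreeOn.isComet_or_card_le_of_condTuranBelow (hV : CondTuranBelow α #V)
    (hE : PCFreeOn V E) (hM : ¬ (E : Set (Finset α)).Intersecting) :
    IsComet V E ∨ #E ≤ nonCometBound #V := by
  by_cases hsplit : Splits E
  · obtain ⟨i, j, hi, hj, hij, hcard⟩ := hE.exists_card_le_of_splits hV le_rfl hsplit
    exact .inr (hcard.trans (hij ▸ pcFreeBound_add_le_nonCometBound hi hj))
  by_cases hA : ∃ a b q w g h, DoublyHooked E a b q w g h
  · obtain ⟨a, b, q, w, g, h, hA⟩ := hA
    exact .inr (hA.card_le hE hV)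
  push Not at hA
  obtain ⟨a, b, q, c, g, hC⟩ := hE.exists_hookedPair hsplit hM
  have hN : ¬ Splits (edgesAvoiding E a b) := fun hN ↦
    have ⟨w, z, f, f', hA'⟩ := hC.exists_doublyHooked hE hsplit hN
    hA a b w z f f' hA'
  by_cases hI : (edgesAvoiding E a b : Set (Finset α)).Intersecting
  · exact hC.isComet_or_card_le_of_intersecting hE hI
  · exact .inr (hC.card_le_of_not_intersecting hE hV hA hN hI)

theorem condTuranBelow (α : Type*) [DecidableEq α] (n : ℕ) : CondTuranBelow α n := by
  induction n with
  | zero => exact fun W F hW ↦ absurd hW (Nat.not_lt_zero _)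
  | succ n ih =>
    intro W F hW hF hM
    have hWn : CondTuranBelow α #W := fun W' F' hW' ↦ ih (by omega)
    rcases hF.isComet_or_card_le_of_condTuranBelow hWn hM with hcomet | hle
    · exact hcomet.card_eq ▸ four_add_choose_two_le_condTuranNumber (hF.six_le_card hM)
    · exact hle.trans (nonCometBound_le_condTuranNumber _)

theorem PCFreeOn.card_le_condTuranNumber (hE : PCFreeOn V E)
    (hM : ¬ (E : Set (Finset α)).Intersecting) : #E ≤ condTuranNumber #V :=
  condTuranBelow α (#V + 1) (Nat.lt_succ_self _) hE hM

theorem PCFreeOn.card_eq_iff_isComet (hE : PCFreeOn V E)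
    (hM : ¬ (E : Set (Finset α)).Intersecting) (hV : 11 ≤ #V) :
    #E = 4 + (#V - 4).choose 2 ↔ IsComet V E := by
  refine ⟨fun hcard ↦ ?_, IsComet.card_eq⟩
  refine (hE.isComet_or_card_le_of_condTuranBelow (condTuranBelow α _) hM).resolve_right ?_
  rw [hcard, ← condTuranNumber_of_eleven_le hV, not_le]
  exact nonCometBound_lt_condTuranNumber hV

end Main

section Constructions

theorem pcFreeOn_powersetCard_three (hV : #V ≤ 5) : PCFreeOn V (V.powersetCard 3) where
  sized _ he := (mem_powersetCard.1 he).2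
  subset _ he := (mem_powersetCard.1 he).1
  erase_subset e he f hf g hg p q _ hef hfg x hx := by
    rw [mem_powersetCard] at he hf hg
    have hunion : #(f ∪ g) = 5 := by
      have := card_union_add_card_inter f g
      rw [hfg, card_singleton, hf.2, hg.2] at this
      omega
    have hfgV : f ∪ g = V := eq_of_subset_of_card_le (union_subset hf.1 hg.1) (hunion ▸ hV)
    obtain ⟨hxp, hxe⟩ := mem_erase.1 hx
    refine (mem_union.1 (hfgV ▸ he.1 hxe)).resolve_left fun hxf ↦ hxp ?_
    exact mem_singleton.1 (hef ▸ mem_inter.2 ⟨hxe, hxf⟩)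

theorem PCFreeOn.union (hE : PCFreeOn V E) (hF : PCFreeOn W F) (hVW : Disjoint V W) :
    PCFreeOn (V ∪ W) (E ∪ F) where
  sized := by
    rw [coe_union]
    exact Set.sized_union.2 ⟨hE.sized, hF.sized⟩
  subset e he := (mem_union.1 he).elim (fun he ↦ (hE.subset e he).trans subset_union_left)
    fun he ↦ (hF.subset e he).trans subset_union_right
  erase_subset e he f hf g hg p q hpq hef hfg := by
    have cross {k l x} (hk : k ∈ E) (hl : l ∈ F) : k ∩ l ≠ {x} := by
      rw [disjoint_iff_inter_eq_empty.1 (hVW.mono (hE.subset k hk) (hF.subset l hl))]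
      exact (singleton_ne_empty x).symm
    rcases mem_union.1 hf with hf | hf
    · have he := (mem_union.1 he).resolve_right fun he ↦ cross hf he (inter_comm e f ▸ hef)
      have hg := (mem_union.1 hg).resolve_right fun hg ↦ cross hf hg hfg
      exact hE.erase_subset he hf hg hpq hef hfg
    · have he := (mem_union.1 he).resolve_left fun he ↦ cross he hf hef
      have hg := (mem_union.1 hg).resolve_left fun hg ↦ cross hg hf (inter_comm f g ▸ hfg)
      exact hF.erase_subset he hf hg hpq hef hfg

theorem card_powersetCard_three_union (hV : #V = 5) (hW : #W = 5) (hVW : Disjoint V W) :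
    #(V.powersetCard 3 ∪ W.powersetCard 3) = 20 := by
  rw [card_union_of_disjoint, card_powersetCard, card_powersetCard, hV, hW]
  · rfl
  refine disjoint_left.2 fun e heV heW ↦ ?_
  rw [mem_powersetCard] at heV heW
  have := disjoint_self_iff_empty e |>.1 (hVW.mono heV.1 heW.1)
  simp [this] at heV

/-- The triples of `V` containing one of the pairs `A` and `B`. -/
def twoPairStars (V A B : Finset α) : Finset (Finset α) :=
  {e ∈ V.powersetCard 3 | A ⊆ e} ∪ {e ∈ V.powersetCard 3 | B ⊆ e}

variable {A B : Finset α}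

theorem mem_twoPairStars :
    e ∈ twoPairStars V A B ↔ (#e = 3 ∧ e ⊆ V) ∧ (A ⊆ e ∨ B ⊆ e) := by
  rw [twoPairStars, mem_union, mem_filter, mem_filter, mem_powersetCard]
  tauto

theorem twoPairStars_comm (V A B : Finset α) : twoPairStars V A B = twoPairStars V B A :=
  union_comm _ _

theorem card_twoPairStars (hA : #A = 2) (hB : #B = 2) (hAB : Disjoint A B) (hAV : A ⊆ V)
    (hBV : B ⊆ V) : #(twoPairStars V A B) = 2 * #V - 4 := by
  rw [twoPairStars, card_union_of_disjoint,
    card_filter_powersetCard_subset A V 3 hAV (by omega),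
    card_filter_powersetCard_subset B V 3 hBV (by omega), hA, hB, Nat.choose_one_right]
  · omega
  refine disjoint_left.2 fun e heA heB ↦ ?_
  rw [mem_filter, mem_powersetCard] at heA heB
  have := card_le_card (union_subset heA.2 heB.2)
  rw [card_union_of_disjoint hAB] at this
  omega

theorem pcFreeOn_twoPairStars (hA : #A = 2) (hB : #B = 2) : PCFreeOn V (twoPairStars V A B) where
  sized e he := (mem_twoPairStars.1 he).1.1
  subset e he := (mem_twoPairStars.1 he).1.2
  erase_subset e he f hf g hg p q hpq hef hfg := by
    wlog hAf : A ⊆ f generalizing A B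
    · rw [twoPairStars_comm] at he hf hg
      exact this hB hA he hf hg ((mem_twoPairStars.1 hf).2.resolve_right hAf)
    have not_subset_of_inter {k x} (hk : f ∩ k = {x}) : ¬ A ⊆ k := fun hAk ↦ by
      have := card_le_card (hk ▸ subset_inter hAf hAk)
      rw [card_singleton] at this
      omega
    obtain ⟨⟨he3, -⟩, heAB⟩ := mem_twoPairStars.1 he
    have hBe : B ⊆ e := heAB.resolve_left (not_subset_of_inter (inter_comm e f ▸ hef))
    have hBg : B ⊆ g := (mem_twoPairStars.1 hg).2.resolve_left (not_subset_of_inter hfg)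
    have hp : p ∈ e ∩ f := hef ▸ mem_singleton_self p
    rw [mem_inter] at hp
    have hpB : p ∉ B := fun hpB ↦ hpq <|
      mem_singleton.1 (hfg ▸ mem_inter.2 ⟨hp.2, hBg hpB⟩)
    have hBe' : B = e.erase p := eq_of_subset_of_card_le (subset_erase.2 ⟨hBe, hpB⟩) (by
      rw [card_erase_of_mem hp.1]; omega)
    exact hBe' ▸ hBg

variable {K : Finset α}

theorem eq_of_mem_cometOn_of_inter_eq_singleton (hK : #K ≤ 4)
    (he : e ∈ cometOn V K q) (hf : f ∈ cometOn V K q) (hef : e ∩ f = {x}) : x = q := by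
  obtain ⟨he3, heK⟩ := mem_cometOn.1 he
  obtain ⟨hf3, hfK⟩ := mem_cometOn.1 hf
  have hx : x ∈ e ∩ f := hef ▸ mem_singleton_self x
  rw [mem_inter] at hx
  rcases heK with heK | ⟨hqe, heV⟩ <;> rcases hfK with hfK | ⟨hqf, hfV⟩
  · have := card_le_card (union_subset heK hfK)
    have := card_union_add_card_inter e f
    rw [hef, card_singleton] at this
    omega
  · exact (mem_insert.1 (hfV hx.2)).resolve_right fun hx' ↦ (mem_sdiff.1 hx').2 (heK hx.1)
  · exact (mem_insert.1 (heV hx.1)).resolve_right fun hx' ↦ (mem_sdiff.1 hx').2 (hfK hx.2)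
  · exact (mem_singleton.1 (hef ▸ mem_inter.2 ⟨hqe, hqf⟩)).symm

theorem subset_of_mem_cometOn (hq : q ∈ K) (hKV : K ⊆ V) (he : e ∈ cometOn V K q) : e ⊆ V :=
  (mem_cometOn.1 he).2.elim (·.trans hKV) fun h ↦
    h.2.trans (insert_subset (hKV hq) sdiff_subset)

theorem pcFreeOn_cometOn (hq : q ∈ K) (hKV : K ⊆ V) (hK : #K ≤ 4) :
    PCFreeOn V (cometOn V K q) where
  sized _ he := (mem_cometOn.1 he).1
  subset _ he := subset_of_mem_cometOn hq hKV he
  erase_subset _ he _ hf _ hg _ _ hne hef hfg := absurd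
    ((eq_of_mem_cometOn_of_inter_eq_singleton hK he hf hef).trans
      (eq_of_mem_cometOn_of_inter_eq_singleton hK hf hg hfg).symm) hne

end Constructions

section Copies

variable {β : Type*} [DecidableEq β] {φ : α → β} {K : Finset α}

theorem PCFreeOn.of_image {W : Finset β} {F : Finset (Finset β)} (hF : PCFreeOn W F)
    (hφ : Set.InjOn φ V) (hE : ∀ e ∈ E, e ⊆ V) (hEF : ∀ e ∈ E, e.image φ ∈ F) : PCFreeOn V E where
  sized e he := by
    rw [← card_image_of_injOn (hφ.mono (coe_subset.2 (hE e he)))]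
    exact hF.sized (hEF e he)
  subset := hE
  erase_subset e he f hf g hg p q hpq hef hfg := by
    have image_inter {k l} (hk : k ∈ E) (hl : l ∈ E) :
        k.image φ ∩ l.image φ = (k ∩ l).image φ := by
      refine (image_inter_of_injOn k l (hφ.mono ?_)).symm
      exact_mod_cast union_subset (hE k hk) (hE l hl)
    have hp : p ∈ e ∩ f := hef ▸ mem_singleton_self p
    have hq : q ∈ f ∩ g := hfg ▸ mem_singleton_self q
    rw [mem_inter] at hp hq
    have hsub := hF.erase_subset (hEF e he) (hEF f hf) (hEF g hg)
      (hφ.ne (hE e he hp.1) (hE f hf hq.1) hpq)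
      (by rw [image_inter he hf, hef, image_singleton])
      (by rw [image_inter hf hg, hfg, image_singleton])
    have heV := (Finset.erase_subset p e).trans (hE e he)
    rw [← image_subset_image_iff_of_injOn hφ heV (hE g hg)]
    refine subset_trans (image_subset_iff.2 fun x hx ↦ mem_erase.2 ⟨?_, ?_⟩) hsub
    · exact hφ.ne (heV hx) (hE e he hp.1) (ne_of_mem_erase hx)
    · exact mem_image_of_mem φ (mem_of_mem_erase hx)

theorem image_mem_cometOn_iff (hφ : Set.InjOn φ V) (hq : q ∈ V) (hKV : K ⊆ V) (he : e ⊆ V) :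
    e.image φ ∈ cometOn (V.image φ) (K.image φ) (φ q) ↔ e ∈ cometOn V K q := by
  have hqVK : insert q (V \ K) ⊆ V := insert_subset hq sdiff_subset
  rw [mem_cometOn, mem_cometOn, card_image_of_injOn (hφ.mono (coe_subset.2 he)),
    image_subset_image_iff_of_injOn hφ he hKV, ← image_sdiff_of_injOn hφ hKV, ← image_insert,
    image_subset_image_iff_of_injOn hφ he hqVK, ← singleton_subset_iff, ← image_singleton,
    image_subset_image_iff_of_injOn hφ (singleton_subset_iff.2 hq) he, singleton_subset_iff]

theorem image_cometOn (hφ : Set.InjOn φ V) (hq : q ∈ K) (hKV : K ⊆ V) :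
    (cometOn V K q).image (image φ) = cometOn (V.image φ) (K.image φ) (φ q) := by
  ext t
  rw [mem_image]
  constructor
  · rintro ⟨e, he, rfl⟩
    exact (image_mem_cometOn_iff hφ (hKV hq) hKV (subset_of_mem_cometOn hq hKV he)).2 he
  · intro ht
    have htV := subset_of_mem_cometOn (mem_image_of_mem φ hq) (image_subset_image hKV) ht
    obtain ⟨e, he, rfl⟩ := subset_image_iff.1 htV
    exact ⟨e, (image_mem_cometOn_iff hφ (hKV hq) hKV (coe_subset.1 he)).1 ht, rfl⟩

end Copies

section ThreeGraphs

open ThreeGraph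

variable {H G : ThreeGraph} {n m : ℕ}

theorem PCFreeOn.of_containsCopy (hH : PCFreeOn H.verts H.edges) (hG : G.IsValid)
    (hHG : H.ContainsCopy G) : PCFreeOn G.verts G.edges :=
  have ⟨_, hφ, _, hedges⟩ := hHG
  hH.of_image hφ (fun e he ↦ (hG e he).2) hedges

theorem PCFreeOn.isValid (hH : PCFreeOn H.verts H.edges) : H.IsValid :=
  fun e he ↦ ⟨hH.sized he, hH.subset e he⟩

theorem PCFreeOn.free_pathP (hH : PCFreeOn H.verts H.edges) : H.Free pathP := fun hP ↦
  have hvalid : pathP.IsValid := by rw [IsValid]; decide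
  absurd ((hH.of_containsCopy hvalid hP).erase_subset (e := {0, 1, 2}) (f := {2, 3, 4})
    (g := {4, 5, 6}) (p := 2) (q := 4) (by decide) (by decide) (by decide) (by decide) (by decide)
    (by decide)) (by decide)

theorem PCFreeOn.free_triangleC (hH : PCFreeOn H.verts H.edges) : H.Free triangleC := fun hC ↦
  have hvalid : triangleC.IsValid := by rw [IsValid]; decide
  absurd ((hH.of_containsCopy hvalid hC).erase_subset (e := {0, 1, 2}) (f := {2, 3, 4})
    (g := {4, 5, 0}) (p := 2) (q := 4) (by decide) (by decide) (by decide) (by decide) (by decide)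
    (by decide)) (by decide)

theorem containsCopy_of_nodup {l : List ℕ} (hl : l.Nodup) (hG : G.verts = range l.length)
    (hlH : ∀ x ∈ l, x ∈ H.verts) (hedges : ∀ e ∈ G.edges, e.image (l.getD · 0) ∈ H.edges) :
    H.ContainsCopy G := by
  have lt_length {i} (hi : i ∈ G.verts) : i < l.length := mem_range.1 (hG ▸ hi)
  refine ⟨(l.getD · 0), fun i hi j hj hij ↦ ?_, fun i hi ↦ ?_, hedges⟩
  · simpa only [List.getD_eq_getElem _ _ (lt_length hi), List.getD_eq_getElem _ _ (lt_length hj),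
      hl.getElem_inj_iff] using hij
  · simpa only [List.getD_eq_getElem _ _ (lt_length hi)] using hlH _ (List.getElem_mem _)

theorem containsCopy_pathP (hH : H.IsValid) {a b c d e f g : ℕ} (hl : [a, b, c, d, e, f, g].Nodup)
    (habc : {a, b, c} ∈ H.edges) (hcde : {c, d, e} ∈ H.edges) (hefg : {e, f, g} ∈ H.edges) :
    H.ContainsCopy pathP := by
  refine containsCopy_of_nodup hl rfl ?_ (by simp [pathP, *])
  have := (hH _ habc).2
  have := (hH _ hcde).2
  have := (hH _ hefg).2
  grind

theorem containsCopy_triangleC (hH : H.IsValid) {a b c d e f : ℕ} (hl : [a, b, c, d, e, f].Nodup)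
    (habc : {a, b, c} ∈ H.edges) (hcde : {c, d, e} ∈ H.edges) (hefa : {e, f, a} ∈ H.edges) :
    H.ContainsCopy triangleC := by
  refine containsCopy_of_nodup hl rfl ?_ (by simp [triangleC, *])
  have := (hH _ habc).2
  have := (hH _ hcde).2
  have := (hH _ hefa).2
  grind

theorem containsCopy_matchingM (hH : H.IsValid) {a b c d e f : ℕ} (hl : [a, b, c, d, e, f].Nodup)
    (habc : {a, b, c} ∈ H.edges) (hdef : {d, e, f} ∈ H.edges) : H.ContainsCopy matchingM := by
  refine containsCopy_of_nodup hl rfl ?_ (by simp [matchingM, *])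
  have := (hH _ habc).2
  have := (hH _ hdef).2
  grind

theorem pcFreeOn_of_free (hH : H.IsValid) (hP : H.Free pathP) (hC : H.Free triangleC) :
    PCFreeOn H.verts H.edges where
  sized e he := (hH e he).1
  subset e he := (hH e he).2
  erase_subset e he f hf g hg p q hpq hef hfg t ht := by
    by_contra htg
    obtain ⟨htp, hte⟩ := mem_erase.1 ht
    have eq_p {x} (hxe : x ∈ e) (hxf : x ∈ f) : x = p :=
      mem_singleton.1 (hef ▸ mem_inter.2 ⟨hxe, hxf⟩)
    have eq_q {x} (hxf : x ∈ f) (hxg : x ∈ g) : x = q :=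
      mem_singleton.1 (hfg ▸ mem_inter.2 ⟨hxf, hxg⟩)
    have hp : p ∈ e ∩ f := hef ▸ mem_singleton_self p
    have hq : q ∈ f ∩ g := hfg ▸ mem_singleton_self q
    rw [mem_inter] at hp hq
    obtain ⟨y, hyp, hyt, rfl⟩ := exists_eq_triple_of_mem_of_mem (hH e he).1 hp.1 hte htp.symm
    obtain ⟨z, hzp, hzq, rfl⟩ := exists_eq_triple_of_mem_of_mem (hH f hf).1 hp.2 hq.1 hpq
    have hf' : {p, z, q} ∈ H.edges := pair_comm q z ▸ hf
    by_cases hyg : y ∈ g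
    · obtain ⟨v, hvq, hvy, rfl⟩ := exists_eq_triple_of_mem_of_mem (hH g hg).1 hq.2 hyg (by grind)
      have he' : {y, t, p} ∈ H.edges := by convert he using 1; grind
      refine hC (containsCopy_triangleC hH ?_ he' hf' (pair_comm y v ▸ hg))
      simp only [List.nodup_cons, List.mem_cons, List.not_mem_nil]
      grind
    · obtain ⟨u, v, hqu, hqv, huv, rfl⟩ := exists_eq_triple_of_mem (hH g hg).1 hq.2
      have he' : {t, y, p} ∈ H.edges := by convert he using 1; grind
      refine hP (containsCopy_pathP hH ?_ he' hf' hg)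
      simp only [List.nodup_cons, List.mem_cons, List.not_mem_nil]
      grind

theorem containsCopy_matchingM_iff (hH : H.IsValid) :
    H.ContainsCopy matchingM ↔ ¬ (H.edges : Set (Finset ℕ)).Intersecting := by
  rw [not_intersecting_iff]
  constructor
  · rintro ⟨φ, hφ, -, hedges⟩
    refine ⟨_, hedges {0, 1, 2} (by decide), _, hedges {3, 4, 5} (by decide), ?_⟩
    rw [disjoint_iff_inter_eq_empty, ← image_inter_of_injOn _ _ (hφ.mono ?_)]
    · exact image_eq_empty.2 (by decide)
    · exact_mod_cast (by decide : {0, 1, 2} ∪ {3, 4, 5} ⊆ matchingM.verts)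
  · rintro ⟨e, he, f, hf, hef⟩
    obtain ⟨a, b, c, hab, hac, hbc, rfl⟩ := card_eq_three.1 (hH e he).1
    obtain ⟨x, y, z, hxy, hxz, hyz, rfl⟩ := card_eq_three.1 (hH f hf).1
    refine containsCopy_matchingM hH ?_ he hf
    simp only [disjoint_insert_left, disjoint_singleton_left, mem_insert, mem_singleton] at hef
    simp only [List.nodup_cons, List.mem_cons, List.not_mem_nil]
    grind

theorem mem_condTuranSet :
    m ∈ condTuranSet n ↔ ∃ (V : Finset ℕ) (E : Finset (Finset ℕ)), #V = n ∧ PCFreeOn V E ∧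
      ¬ (E : Set (Finset ℕ)).Intersecting ∧ #E = m := by
  constructor
  · rintro ⟨H, hH, hn, hP, hC, hM, hm⟩
    exact ⟨H.verts, H.edges, hn, pcFreeOn_of_free hH hP hC,
      (containsCopy_matchingM_iff hH).1 hM, hm⟩
  · rintro ⟨V, E, hn, hE, hM, hm⟩
    have hH : PCFreeOn (ThreeGraph.mk V E).verts (ThreeGraph.mk V E).edges := hE
    exact ⟨⟨V, E⟩, hH.isValid, hn, hH.free_pathP, hH.free_triangleC,
      (containsCopy_matchingM_iff hH.isValid).2 hM, hm⟩

theorem le_condTuranNumber_of_mem_condTuranSet (hm : m ∈ condTuranSet n) :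
    m ≤ condTuranNumber n := by
  obtain ⟨V, E, rfl, hE, hM, rfl⟩ := mem_condTuranSet.1 hm
  exact hE.card_le_condTuranNumber hM

theorem two_mul_sub_four_mem_condTuranSet (hn : 6 ≤ n) : 2 * n - 4 ∈ condTuranSet n := by
  have hV : ∀ i ≤ 5, i ∈ range n := fun i hi ↦ mem_range.2 (by omega)
  refine mem_condTuranSet.2 ⟨range n, twoPairStars (range n) {0, 1} {2, 3}, card_range n,
    pcFreeOn_twoPairStars rfl rfl, not_intersecting_iff.2 ?_, ?_⟩
  · refine ⟨{0, 1, 4}, mem_twoPairStars.2 ?_, {2, 3, 5}, mem_twoPairStars.2 ?_, by decide⟩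
    · exact ⟨⟨rfl, by grind⟩, .inl (by decide)⟩
    · exact ⟨⟨rfl, by grind⟩, .inr (by decide)⟩
  · rw [card_twoPairStars rfl rfl (by decide) (by grind) (by grind), card_range]

theorem twenty_mem_condTuranSet : 20 ∈ condTuranSet 10 := by
  have hdisj : Disjoint (range 5) (Ico 5 10) := by decide
  refine mem_condTuranSet.2 ⟨range 5 ∪ Ico 5 10, (range 5).powersetCard 3 ∪
    (Ico 5 10).powersetCard 3, by decide, ?_, not_intersecting_iff.2 ?_, ?_⟩
  · exact (pcFreeOn_powersetCard_three (by decide)).union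
      (pcFreeOn_powersetCard_three (by decide)) hdisj
  · refine ⟨{0, 1, 2}, mem_union_left _ ?_, {5, 6, 7}, mem_union_right _ ?_, by decide⟩ <;>
      exact mem_powersetCard.2 (by decide)
  · exact card_powersetCard_three_union (by decide) (by decide) hdisj

theorem four_add_choose_two_mem_condTuranSet (hn : 6 ≤ n) :
    4 + (n - 4).choose 2 ∈ condTuranSet n := by
  have hK : range 4 ⊆ range n := range_subset_range.2 (by omega)
  refine mem_condTuranSet.2 ⟨range n, cometOn (range n) (range 4) 0, card_range n,
    pcFreeOn_cometOn (by decide) hK (by decide), not_intersecting_iff.2 ?_, ?_⟩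
  · refine ⟨{1, 2, 3}, mem_cometOn.2 ⟨rfl, .inl (by decide)⟩,
      {0, 4, 5}, mem_cometOn.2 ⟨rfl, .inr ⟨by decide, ?_⟩⟩, by decide⟩
    grind
  · rw [card_cometOn (by decide) hK (by decide), card_range]

theorem edges_comet : (comet n).edges = cometOn (range n) (range 4) 0 := by
  have hsdiff : range n \ range 4 = Ico 4 n := by grind
  rw [cometOn, hsdiff]
  rfl

theorem isoCopy_comet_iff_isComet (hn : 4 ≤ n) (hH : #H.verts = n) :
    IsoCopy (comet n) H ↔ IsComet H.verts H.edges := by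
  have h0 : 0 ∈ range 4 := by decide
  have hn' : range 4 ⊆ range n := range_subset_range.2 hn
  rw [IsoCopy, edges_comet]
  constructor
  · rintro ⟨φ, hφ, hverts, hedges⟩
    change Set.InjOn φ (range n) at hφ
    change (range n).image φ = H.verts at hverts
    refine ⟨(range 4).image φ, φ 0, mem_image_of_mem φ h0, hverts ▸ image_subset_image hn',
      card_image_of_injOn (hφ.mono (coe_subset.2 hn')), ?_⟩
    rw [← hedges, image_cometOn hφ h0 hn', hverts]
  · rintro ⟨K, q, hq, hKV, hK, hE⟩
    obtain ⟨χ, hχ, hχK, hχ0⟩ := exists_injOn_extension (φ := fun _ ↦ q) (t := K)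
      (singleton_subset_iff.2 h0) (by simp) (by simpa using hq) (by rw [hK, card_range])
    obtain ⟨ψ, hψ, hψV, hψχ⟩ := exists_injOn_extension hn' hχ (hχK ▸ hKV)
      (by rw [hH, card_range])
    refine ⟨ψ, hψ, hψV, ?_⟩
    rw [image_cometOn hψ h0 hn', hψV, hE, image_congr hψχ, hχK, hψχ h0, hχ0 (by simp)]

end ThreeGraphs

end CondTuran

open CondTuran

/-- The conditional Turán number `ex(n; {P,C} | M)`: it equals `2n - 4` for
`6 ≤ n ≤ 9`, `20` for `n = 10`, and `4 + binom(n-4,2)` for `n ≥ 11`, in which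
case the extremal 3-graph is exactly the comet `Co(n)`. -/
theorem cond_turan_PC_given_M (n : ℕ) (hn : 6 ≤ n) :
    (n ≤ 9 → IsGreatest (condTuranSet n) (2 * n - 4)) ∧
    (n = 10 → IsGreatest (condTuranSet n) 20) ∧
    (11 ≤ n →
      IsGreatest (condTuranSet n) (4 + (n - 4).choose 2) ∧
      ∀ H : ThreeGraph, H.IsValid → H.verts.card = n → H.Free pathP →
        H.Free triangleC → H.ContainsCopy matchingM →
        (H.edges.card = 4 + (n - 4).choose 2 ↔ ThreeGraph.IsoCopy (comet n) H)) := by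
  have hupper : condTuranNumber n ∈ upperBounds (condTuranSet n) :=
    fun m ↦ le_condTuranNumber_of_mem_condTuranSet
  refine ⟨fun h9 ↦ ⟨two_mul_sub_four_mem_condTuranSet hn, ?_⟩, ?_, fun h11 ↦
    ⟨⟨four_add_choose_two_mem_condTuranSet hn, ?_⟩, fun H hH hcard hP hC hM ↦ ?_⟩⟩
  · rwa [condTuranNumber, if_pos h9] at hupper
  · rintro rfl
    exact ⟨twenty_mem_condTuranSet, hupper⟩
  · rwa [condTuranNumber_of_eleven_le h11] at hupper
  · rw [isoCopy_comet_iff_isComet (by omega) hcard, ← hcard]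
    exact (pcFreeOn_of_free hH hP hC).card_eq_iff_isComet
      ((containsCopy_matchingM_iff hH).1 hM) (hcard ▸ h11)
end
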